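/- arXiv:2302.08879 — 7 statements merged into one kernel-verified Lean document; each statement's English description precedes it below -/
import Mathlib

section
/- Let (𝒱,(K_b)_{b∈B}) be a BIBD with V vertices, block size K (2 ≤ K ≤ V), and pair-count Λ ≥ 1. If L ⊆ 𝒱 is an arc, i.e., #(K_b ∩ L) ≤ 2 for every b ∈ B, then (#L − 1)·(K − 1) ≤ V − 1. Moreover, for a nonempty arc L, equality (#L − 1)·(K − 1) = V − 1 holds if and only if #(K_b ∩ L) ∈ {0, 2} for every b ∈ B. -/
theorem arc_count_aux
    {𝒱 β : Type*} [DecidableEq 𝒱] [Fintype β]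
    (Λ : ℕ) (Kb : β → Finset 𝒱)
    (hBIBD : ∀ v₁ v₂ : 𝒱, v₁ ≠ v₂ →
      (Finset.univ.filter (fun b => v₁ ∈ Kb b ∧ v₂ ∈ Kb b)).card = Λ)
    (S : Finset 𝒱) (v : 𝒱) (hv : v ∈ S) :
    ∑ b ∈ Finset.univ.filter (fun b => v ∈ Kb b), ((Kb b ∩ S).card - 1) = (S.card - 1) * Λ := by
  have h := Finset.sum_card_bipartiteAbove_eq_sum_card_bipartiteBelow
    (s := Finset.univ.filter (fun b => v ∈ Kb b)) (t := S.erase v) (fun b u => u ∈ Kb b)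
  have h1 : ∀ b ∈ Finset.univ.filter (fun b => v ∈ Kb b),
      ((Kb b ∩ S).card - 1) =
        (Finset.bipartiteAbove (fun b u => u ∈ Kb b) (S.erase v) b).card := by
    intro b hb
    have hb' : v ∈ Kb b := by simpa using hb
    rw [← Finset.card_erase_of_mem (Finset.mem_inter.2 ⟨hb', hv⟩)]
    congr 1
    ext u
    simp only [Finset.bipartiteAbove, Finset.mem_erase, Finset.mem_inter, Finset.mem_filter]
    tauto
  have h2 : ∀ u ∈ S.erase v,
      (Finset.bipartiteBelow (fun b u => u ∈ Kb b)
        (Finset.univ.filter (fun b => v ∈ Kb b)) u).card = Λ := by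
    intro u hu
    rw [← hBIBD v u (Finset.ne_of_mem_erase hu).symm, Finset.bipartiteBelow, Finset.filter_filter]
  rw [Finset.sum_congr rfl h1, h, Finset.sum_congr rfl h2, Finset.sum_const,
    Finset.card_erase_of_mem hv, smul_eq_mul]

/-- In a BIBD with `V` vertices, block size `K` (`2 ≤ K ≤ V`) and
pair-count `Λ ≥ 1`, any arc `L` (a set meeting every block in at most 2 points)
satisfies `(#L − 1)(K − 1) ≤ V − 1`; moreover, for a nonempty arc, equality holds
iff `L` meets every block in either 0 or 2 points (i.e. `L` is an oval). -/
theorem arc_bound_in_BIBD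
    {𝒱 β : Type*} [Fintype 𝒱] [DecidableEq 𝒱] [Fintype β] [Nonempty β]
    (K Λ : ℕ) (hK2 : 2 ≤ K) (hKV : K ≤ Fintype.card 𝒱) (hΛ : 1 ≤ Λ)
    (Kb : β → Finset 𝒱) (hcard : ∀ b, (Kb b).card = K)
    (hBIBD : ∀ v₁ v₂ : 𝒱, v₁ ≠ v₂ →
      (Finset.univ.filter (fun b => v₁ ∈ Kb b ∧ v₂ ∈ Kb b)).card = Λ)
    (L : Finset 𝒱) (harc : ∀ b, (Kb b ∩ L).card ≤ 2) :
    (L.card - 1) * (K - 1) ≤ Fintype.card 𝒱 - 1 ∧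
    (L.Nonempty →
      ((L.card - 1) * (K - 1) = Fintype.card 𝒱 - 1 ↔
        ∀ b, (Kb b ∩ L).card = 0 ∨ (Kb b ∩ L).card = 2)) := by
  classical
  have key : ∀ v ∈ L, (L.card - 1) * (K - 1) ≤ Fintype.card 𝒱 - 1 ∧
      ((L.card - 1) * (K - 1) = Fintype.card 𝒱 - 1 ↔
        ∀ b, v ∈ Kb b → (Kb b ∩ L).card = 2) := by
    intro v hv
    have hL := arc_count_aux Λ Kb hBIBD L v hv
    have hU := arc_count_aux Λ Kb hBIBD Finset.univ v (Finset.mem_univ v)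
    simp only [Finset.inter_univ, hcard, Finset.sum_const, smul_eq_mul, Finset.card_univ] at hU
    have hle : ∀ b ∈ Finset.univ.filter (fun b => v ∈ Kb b), (Kb b ∩ L).card - 1 ≤ 1 := by
      intro b _
      have := harc b
      omega
    have hsum := Finset.sum_le_sum hle
    have hiff := Finset.sum_eq_sum_iff_of_le hle
    rw [hL, ← Finset.card_eq_sum_ones] at hsum hiff
    have hK : 0 < K - 1 := by omega
    have e : (L.card - 1) * (K - 1) * Λ = (L.card - 1) * Λ * (K - 1) := by ring
    refine ⟨?_, ?_⟩
    · refine Nat.le_of_mul_le_mul_right ?_ hΛ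
      rw [e, ← hU]
      exact Nat.mul_le_mul_right _ hsum
    · rw [← Nat.mul_left_inj (a := Λ) (by omega), e, ← hU, Nat.mul_left_inj (by omega), hiff]
      refine forall_congr' fun b => ?_
      have := harc b
      simp only [Finset.mem_filter, Finset.mem_univ, true_and]
      refine imp_congr_right fun _ => ?_
      omega
  refine ⟨?_, ?_⟩
  · rcases L.eq_empty_or_nonempty with rfl | ⟨v, hv⟩
    · simp
    · exact (key v hv).1
  · rintro ⟨v, hv⟩
    constructor
    · intro h b
      rcases (Kb b ∩ L).eq_empty_or_nonempty with h0 | ⟨u, hu⟩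
      · left
        rw [h0, Finset.card_empty]
      · right
        rw [Finset.mem_inter] at hu
        exact (key u hu.2).2.1 h b hu.1
    · intro h
      refine (key v hv).2.2 fun b hb => (h b).resolve_left ?_
      exact Finset.card_ne_zero_of_mem (Finset.mem_inter.2 ⟨hb, hv⟩)
end

section
/- Let Q be a prime power, J a positive integer, and B a symplectic form on a 2J-dimensional vector space V over the finite field F_Q. Then the number of Lagrangian subspaces of V (subspaces L with L = L^⊥) equals ∏_{j=1}^{J}(Q^j + 1). -/
open scoped BigOperators

noncomputable section

/-- A bilinear form is symplectic: alternating and nondegenerate. -/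
def IsSymplectic {F V : Type*} [CommRing F] [AddCommGroup V] [Module F V]
    (B : V →ₗ[F] V →ₗ[F] F) : Prop :=
  (∀ v, B v v = 0) ∧ ∀ v : V, v ≠ 0 → ∃ w, B v w ≠ 0

/-- The orthogonal complement of a subset with respect to a bilinear form. -/
def sympPerp {F V : Type*} [CommRing F] [AddCommGroup V] [Module F V]
    (B : V →ₗ[F] V →ₗ[F] F) (S : Set V) : Set V :=
  {w | ∀ v ∈ S, B v w = 0}

/-- A subspace is Lagrangian if it equals its own orthogonal complement. -/
def IsLagrangian {F V : Type*} [CommRing F] [AddCommGroup V] [Module F V]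
    (B : V →ₗ[F] V →ₗ[F] F) (L : Submodule F V) : Prop :=
  (L : Set V) = sympPerp B (L : Set V)

theorem symp_skew {F V : Type*} [Field F] [AddCommGroup V] [Module F V]
    {B : V →ₗ[F] V →ₗ[F] F} (hB : IsSymplectic B) (x y : V) : B x y = - B y x := by
  have h := hB.1 (x + y)
  simp only [map_add, LinearMap.add_apply, hB.1, zero_add, add_zero] at h
  linear_combination h

theorem lag_iff {F V : Type*} [Field F] [AddCommGroup V] [Module F V]
    {B : V →ₗ[F] V →ₗ[F] F} {L : Submodule F V} :
    IsLagrangian B L ↔ ∀ x, x ∈ L ↔ ∀ v ∈ L, B v x = 0 := by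
  unfold IsLagrangian sympPerp
  rw [Set.ext_iff]
  rfl

theorem lag_finrank {F V : Type*} [Field F] [AddCommGroup V] [Module F V] [FiniteDimensional F V]
    {B : V →ₗ[F] V →ₗ[F] F} (hB : IsSymplectic B) {L : Submodule F V} (hL : IsLagrangian B L)
    {J : ℕ} (hdim : Module.finrank F V = 2 * J) : Module.finrank F L = J := by
  have hnd : LinearMap.BilinForm.Nondegenerate B := by
    refine ⟨fun x hx => ?_, fun x hx => ?_⟩
    · by_contra h
      obtain ⟨w, hw⟩ := hB.2 x h
      exact hw (hx w)
    · by_contra h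
      obtain ⟨w, hw⟩ := hB.2 x h
      rw [symp_skew hB, hx w, neg_zero] at hw
      exact hw rfl
  have h1 := LinearMap.BilinForm.finrank_orthogonal hnd L
  have h2 : LinearMap.BilinForm.orthogonal B L = L := by
    ext x
    rw [LinearMap.BilinForm.mem_orthogonal_iff, lag_iff.1 hL x]
  rw [h2] at h1
  have := L.finrank_le
  omega

def sU {F V : Type*} [Field F] [AddCommGroup V] [Module F V]
    (B : V →ₗ[F] V →ₗ[F] F) (v w : V) : Submodule F V := LinearMap.ker ((B v).prod (B w))

theorem mem_sU {F V : Type*} [Field F] [AddCommGroup V] [Module F V]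
    {B : V →ₗ[F] V →ₗ[F] F} {v w x : V} : x ∈ sU B v w ↔ B v x = 0 ∧ B w x = 0 := by
  simp [sU]

theorem proj_mem {F V : Type*} [Field F] [AddCommGroup V] [Module F V]
    {B : V →ₗ[F] V →ₗ[F] F} (hB : IsSymplectic B) {v w : V} (h : B v w = 1) (x : V) :
    x - B x w • v - B v x • w ∈ sU B v w := by
  have hwv : B w v = -1 := by rw [symp_skew hB, h]
  rw [mem_sU]
  simp [hB.1, h, hwv, symp_skew hB x w]

theorem sU_finrank {F V : Type*} [Field F] [AddCommGroup V] [Module F V] [FiniteDimensional F V]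
    {B : V →ₗ[F] V →ₗ[F] F} (hB : IsSymplectic B) {v w : V} (h : B v w = 1)
    {J : ℕ} (hdim : Module.finrank F V = 2 * (J + 1)) :
    Module.finrank F (sU B v w) = 2 * J := by
  have hwv : B w v = -1 := by rw [symp_skew hB, h]
  have hs : LinearMap.range ((B v).prod (B w)) = ⊤ := by
    rw [LinearMap.range_eq_top]
    rintro ⟨a, b⟩
    refine ⟨a • w - b • v, ?_⟩
    simp [hB.1, h, hwv]
  have := LinearMap.finrank_range_add_finrank_ker ((B v).prod (B w))
  rw [hs, finrank_top] at this
  simp only [Module.finrank_prod, Module.finrank_self] at this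
  unfold sU
  omega

theorem sU_symp {F V : Type*} [Field F] [AddCommGroup V] [Module F V]
    {B : V →ₗ[F] V →ₗ[F] F} (hB : IsSymplectic B) {v w : V} (h : B v w = 1) :
    IsSymplectic (B.domRestrict₁₂ (sU B v w) (sU B v w)) := by
  refine ⟨fun u => hB.1 u, fun u hu => ?_⟩
  obtain ⟨x, hx⟩ := hB.2 u (by simpa using hu)
  refine ⟨⟨_, proj_mem hB h x⟩, ?_⟩
  obtain ⟨h1, h2⟩ := mem_sU.1 u.2
  rw [LinearMap.domRestrict₁₂_apply]
  simpa [symp_skew hB u v, symp_skew hB u w, h1, h2] using hx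

/-- The bijection. -/
def lagEquiv {F V : Type*} [Field F] [AddCommGroup V] [Module F V]
    {B : V →ₗ[F] V →ₗ[F] F} (hB : IsSymplectic B) {v w : V} (h : B v w = 1) :
    {L : Submodule F V // IsLagrangian B L ∧ v ∈ L} ≃
      {M : Submodule F (sU B v w) // IsLagrangian (B.domRestrict₁₂ (sU B v w) (sU B v w)) M} where
  toFun L := ⟨L.1.comap (sU B v w).subtype, by
    obtain ⟨L, hL, hv⟩ := L
    rw [lag_iff] at hL ⊢
    rintro ⟨x, hx⟩
    simp only [Submodule.mem_comap, Submodule.subtype_apply, LinearMap.domRestrict₁₂_apply,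
      Subtype.forall]
    constructor
    · intro hxL y _ hyL
      exact (hL x).1 hxL y hyL
    · intro hy
      rw [hL]
      intro y hyL
      have hvy := (hL y).1 hyL v hv
      have hp := proj_mem hB h y
      rw [hvy, zero_smul, sub_zero] at hp
      have := hy _ hp (L.sub_mem hyL (L.smul_mem _ hv))
      simpa [(mem_sU.1 hx).1] using this⟩
  invFun M := ⟨M.1.map (sU B v w).subtype ⊔ Submodule.span F {v}, by
    obtain ⟨M, hM⟩ := M
    rw [lag_iff] at hM
    refine ⟨?_, Submodule.mem_sup_right (Submodule.mem_span_singleton_self v)⟩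
    rw [lag_iff]
    intro x
    constructor
    · intro hx y hy
      rw [Submodule.mem_sup] at hx hy
      obtain ⟨_, ⟨m, hm, rfl⟩, z, hz, rfl⟩ := hx
      obtain ⟨_, ⟨n, hn, rfl⟩, t, ht, rfl⟩ := hy
      obtain ⟨a, rfl⟩ := Submodule.mem_span_singleton.1 hz
      obtain ⟨b, rfl⟩ := Submodule.mem_span_singleton.1 ht
      have h1 := (hM m).1 hm n hn
      rw [LinearMap.domRestrict₁₂_apply] at h1
      simp [h1, hB.1, (mem_sU.1 m.2).1, symp_skew hB n v, (mem_sU.1 n.2).1]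
    · intro hx
      have hvx := hx v (Submodule.mem_sup_right (Submodule.mem_span_singleton_self v))
      have hp := proj_mem hB h x
      rw [hvx, zero_smul, sub_zero] at hp
      rw [Submodule.mem_sup]
      refine ⟨x - B x w • v, ⟨⟨_, hp⟩, ?_, rfl⟩, B x w • v,
        Submodule.smul_mem _ _ (Submodule.mem_span_singleton_self v), by simp⟩
      refine (hM _).2 fun n hn => ?_
      rw [LinearMap.domRestrict₁₂_apply]
      have := hx n (Submodule.mem_sup_left ⟨n, hn, rfl⟩)
      simp [this, symp_skew hB n v, (mem_sU.1 n.2).1]⟩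
  left_inv := by
    rintro ⟨L, hL, hv⟩
    rw [lag_iff] at hL
    ext x
    simp only
    constructor
    · intro hx
      rw [Submodule.mem_sup] at hx
      obtain ⟨_, ⟨m, hm, rfl⟩, z, hz, rfl⟩ := hx
      obtain ⟨a, rfl⟩ := Submodule.mem_span_singleton.1 hz
      exact L.add_mem hm (L.smul_mem _ hv)
    · intro hx
      have hvx := (hL x).1 hx v hv
      have hp := proj_mem hB h x
      rw [hvx, zero_smul, sub_zero] at hp
      rw [Submodule.mem_sup]
      exact ⟨x - B x w • v, ⟨⟨_, hp⟩, L.sub_mem hx (L.smul_mem _ hv), rfl⟩, B x w • v,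
        Submodule.smul_mem _ _ (Submodule.mem_span_singleton_self v), by simp⟩
  right_inv := by
    rintro ⟨M, hM⟩
    ext x
    simp only [Submodule.mem_comap, Submodule.subtype_apply]
    constructor
    · intro hx
      rw [Submodule.mem_sup] at hx
      obtain ⟨_, ⟨m, hm, rfl⟩, z, hz, hxe⟩ := hx
      obtain ⟨a, rfl⟩ := Submodule.mem_span_singleton.1 hz
      have hwv : B w v = -1 := by rw [symp_skew hB, h]
      have h1 := congrArg (B w) hxe
      simp [(mem_sU.1 m.2).2, (mem_sU.1 x.2).2, hwv] at h1
      subst h1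
      have : m = x := Subtype.ext (by simpa using hxe)
      exact this ▸ hm
    · intro hx
      exact Submodule.mem_sup_left ⟨x, hx, rfl⟩

theorem lag_card_aux {F : Type*} [Field F] [Fintype F] (J : ℕ) :
    ∀ (V : Type*) [AddCommGroup V] [Module F V] [Finite V]
    (_ : Module.finrank F V = 2 * J)
    (B : V →ₗ[F] V →ₗ[F] F) (_ : IsSymplectic B),
    Nat.card {L : Submodule F V // IsLagrangian B L} =
      ∏ j ∈ Finset.Icc 1 J, (Fintype.card F ^ j + 1) := by
  classical
  induction J with
  | zero =>
    intro V _ _ _ hdim B hB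
    have : Subsingleton V := Module.finrank_zero_iff.1 (by simpa using hdim)
    simp only [zero_lt_one, Finset.Icc_eq_empty_of_lt, Finset.prod_empty]
    rw [Nat.card_eq_one_iff_unique]
    refine ⟨inferInstance, ⟨⊥, ?_⟩⟩
    rw [lag_iff]
    intro x
    rw [Subsingleton.elim x 0]
    simp
  | succ J ih =>
    intro V _ _ _ hdim B hB
    have := Fintype.ofFinite V
    have := Fintype.ofFinite (Submodule F V)
    set q := Fintype.card F with hq
    have hq1 : 1 < q := Fintype.one_lt_card
    have key := Finset.card_mul_eq_card_mul (fun (v : V) (L : Submodule F V) => v ∈ L)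
      (s := Finset.univ.erase (0 : V))
      (t := Finset.univ.filter (fun L : Submodule F V => IsLagrangian B L))
      (m := ∏ j ∈ Finset.Icc 1 J, (q ^ j + 1)) (n := q ^ (J + 1) - 1)
      (by
        intro v hv
        have hv0 : v ≠ 0 := Finset.ne_of_mem_erase hv
        obtain ⟨w', hw'⟩ := hB.2 v hv0
        have h : B v ((B v w')⁻¹ • w') = 1 := by simp [hw']
        rw [← ih _ (sU_finrank hB h hdim) _ (sU_symp hB h), ← Nat.card_congr (lagEquiv hB h)]
        rw [Nat.card_eq_fintype_card, Fintype.card_subtype]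
        simp [Finset.bipartiteAbove, Finset.filter_filter])
      (by
        intro L hL
        have hL' : IsLagrangian B L := by simpa using hL
        have hc : Fintype.card L = q ^ (J + 1) := by
          rw [Module.card_eq_pow_finrank (K := F), lag_finrank hB hL' hdim]
        rw [← hc, Fintype.card_subtype, Finset.bipartiteBelow, ← Finset.card_erase_of_mem (a := (0 : V)) (by simp)]
        congr 1
        ext x
        simp)
    rw [Finset.card_erase_of_mem (Finset.mem_univ _), Finset.card_univ,
      Module.card_eq_pow_finrank (K := F), hdim, ← Fintype.card_subtype,
      ← Nat.card_eq_fintype_card (α := {L : Submodule F V // IsLagrangian B L}),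
      ← hq] at key
    rw [Finset.prod_Icc_succ_top (by omega)]
    have h1 : 1 < q ^ (J + 1) := Nat.one_lt_pow (by omega) hq1
    have h2 : q ^ (2 * (J + 1)) - 1 = (q ^ (J + 1) + 1) * (q ^ (J + 1) - 1) := by
      rw [mul_comm 2, pow_mul]
      simpa using Nat.sq_sub_sq (q ^ (J + 1)) 1
    rw [h2] at key
    apply Nat.eq_of_mul_eq_mul_right (show 0 < q ^ (J + 1) - 1 by omega)
    rw [← key]
    ring

/-- Over a finite field of prime-power order `Q`, a symplectic
`2J`-dimensional space has exactly `∏_{j=1}^{J}(Q^j + 1)` Lagrangian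
subspaces. -/
theorem card_lagrangian_subspaces
    {Q J : ℕ} (hQ : ∃ p n : ℕ, p.Prime ∧ 0 < n ∧ Q = p ^ n) (hJ : 0 < J)
    {F : Type*} [Field F] [Fintype F] (hF : Fintype.card F = Q)
    {V : Type*} [AddCommGroup V] [Module F V] [Fintype V]
    (hdim : Module.finrank F V = 2 * J)
    (B : V →ₗ[F] V →ₗ[F] F) (hB : IsSymplectic B) :
    {L : Submodule F V | IsLagrangian B L}.ncard =
      ∏ j ∈ Finset.Icc 1 J, (Q ^ j + 1) := by
  subst hF
  exact lag_card_aux J V hdim B hB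
end
end

section
/- Let P be a prime, J a positive integer, and B a symplectic form on a 2J-dimensional vector space V over F_P. Then there exists a set 𝒜 of exactly P^J + 1 Lagrangian subspaces of V such that every nonzero vector of V lies in exactly one member of 𝒜 (a symplectic spread). Consequently the cosets of the members of 𝒜 form an affine plane of order P^J on the point set V: P^J(P^J+1) blocks, each of cardinality P^J, such that every pair of distinct points of V lies in exactly one block. -/
open scoped BigOperators

noncomputable section

theorem exists_darboux {F V : Type*} [Field F] [AddCommGroup V] [Module F V] [FiniteDimensional F V]
    (B : V →ₗ[F] V →ₗ[F] F) (hB : IsSymplectic B) (J : ℕ)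
    (hdim : Module.finrank F V = 2 * J) (k : ℕ) (hk : k ≤ J) :
    ∃ e f : Fin k → V, (∀ i j, B (e i) (e j) = 0) ∧ (∀ i j, B (f i) (f j) = 0) ∧
      (∀ i j, B (e i) (f j) = if i = j then 1 else 0) := by
  have hskew : ∀ x y, B x y = - B y x := by
    intro x y
    have h := hB.1 (x + y)
    simp only [map_add, LinearMap.add_apply, hB.1] at h
    linear_combination h
  induction k with
  | zero => exact ⟨fun _ => 0, fun _ => 0, by simp, by simp, fun i => i.elim0⟩
  | succ k ih =>
    obtain ⟨e, f, hee, hff, hef⟩ := ih (by omega)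
    let T : V →ₗ[F] (Fin k → F) × (Fin k → F) :=
      (LinearMap.pi fun i => B (e i)).prod (LinearMap.pi fun i => B (f i))
    have hker : LinearMap.ker T ≠ ⊥ := by
      apply LinearMap.ker_ne_bot_of_finrank_lt
      rw [hdim]
      simp
      omega
    obtain ⟨v, hv, hv0⟩ := Submodule.exists_mem_ne_zero_of_ne_bot hker
    have hTv : T v = 0 := hv
    have hve : ∀ i, B (e i) v = 0 := fun i => congrFun (congrArg Prod.fst hTv) i
    have hvf : ∀ i, B (f i) v = 0 := fun i => congrFun (congrArg Prod.snd hTv) i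
    have hve' : ∀ i, B v (e i) = 0 := fun i => by rw [hskew, hve, neg_zero]
    have hvf' : ∀ i, B v (f i) = 0 := fun i => by rw [hskew, hvf, neg_zero]
    obtain ⟨w0, hw0⟩ := hB.2 v hv0
    let w1 := (B v w0)⁻¹ • w0
    have hw1 : B v w1 = 1 := by simp [w1, hw0]
    let w := w1 + ∑ i, B (f i) w1 • e i - ∑ i, B (e i) w1 • f i
    have hfe : ∀ i j, B (f i) (e j) = if i = j then -1 else 0 := by
      intro i j
      rw [hskew, hef]
      by_cases h : i = j
      · simp [h]
      · simp [h, Ne.symm h]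
    have hw : B v w = 1 := by
      simp [w, map_add, map_sub, map_sum, hve', hvf', hw1]
    have hew : ∀ i, B (e i) w = 0 := by
      intro i
      simp [w, map_add, map_sub, map_sum, hee, hef]
    have hfw : ∀ i, B (f i) w = 0 := by
      intro i
      simp [w, map_add, map_sub, map_sum, hff, hfe]
    have hwe : ∀ i, B w (e i) = 0 := fun i => by rw [hskew, hew, neg_zero]
    have hwf : ∀ i, B w (f i) = 0 := fun i => by rw [hskew, hfw, neg_zero]
    refine ⟨Fin.cons v e, Fin.cons w f, ?_, ?_, ?_⟩
    · intro i j
      refine Fin.cases ?_ (fun i => ?_) i <;> refine Fin.cases ?_ (fun j => ?_) j <;>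
        simp [hB.1, hve, hve', hee]
    · intro i j
      refine Fin.cases ?_ (fun i => ?_) i <;> refine Fin.cases ?_ (fun j => ?_) j <;>
        simp [hB.1, hfw, hwf, hff]
    · intro i j
      refine Fin.cases ?_ (fun i => ?_) i <;> refine Fin.cases ?_ (fun j => ?_) j
      · simp [hw]
      · simp [hvf', (Fin.succ_ne_zero j).symm]
      · simp [hew]
      · simp [hef]

theorem exists_model {F V K : Type*} [Field F] [AddCommGroup V] [Module F V]
    [FiniteDimensional F V] [Field K] [Algebra F K] [FiniteDimensional F K]
    [Algebra.IsSeparable F K]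
    (B : V →ₗ[F] V →ₗ[F] F) (hB : IsSymplectic B) (J : ℕ)
    (hdim : Module.finrank F V = 2 * J) (hK : Module.finrank F K = J) :
    ∃ φ : (K × K) ≃ₗ[F] V, ∀ p q : K × K,
      B (φ p) (φ q) = Algebra.trace F K (p.1 * q.2 - p.2 * q.1) := by
  obtain ⟨e, f, hee, hff, hef⟩ := exists_darboux B hB J hdim J le_rfl
  have hskew : ∀ x y, B x y = - B y x := by
    intro x y
    have h := hB.1 (x + y)
    simp only [map_add, LinearMap.add_apply, hB.1] at h
    linear_combination h
  have hfe : ∀ i j, B (f i) (e j) = if i = j then -1 else 0 := by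
    intro i j
    rw [hskew, hef]
    by_cases h : i = j
    · simp [h]
    · simp [h, Ne.symm h]
  let b : Module.Basis (Fin J) F K := Module.finBasisOfFinrankEq F K hK
  have key : ∀ x y : K, ∑ i, b.repr x i * Algebra.trace F K (b i * y)
      = Algebra.trace F K (x * y) := by
    intro x y
    conv_rhs => rw [← b.sum_repr x]
    rw [Finset.sum_mul, map_sum]
    refine Finset.sum_congr rfl fun i _ => ?_
    rw [smul_mul_assoc, map_smul, smul_eq_mul]
  let ψ : (K × K) →ₗ[F] V :=
    { toFun := fun p => ∑ i, b.repr p.1 i • e i + ∑ i, Algebra.trace F K (b i * p.2) • f i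
      map_add' := by
        intro p q
        simp only [Prod.fst_add, Prod.snd_add, map_add, Finsupp.add_apply, add_smul, mul_add,
          Finset.sum_add_distrib]
        abel
      map_smul' := by
        intro c p
        simp [Finset.smul_sum, smul_smul] }
  have hψ : ∀ p, ψ p = ∑ i, b.repr p.1 i • e i + ∑ i, Algebra.trace F K (b i * p.2) • f i :=
    fun p => rfl
  have hform : ∀ p q, B (ψ p) (ψ q) = Algebra.trace F K (p.1 * q.2 - p.2 * q.1) := by
    intro p q
    rw [map_sub, ← key, mul_comm p.2, ← key, hψ, hψ]
    simp [map_sum, LinearMap.sum_apply, hee, hff, hef, hfe, sub_eq_add_neg, mul_comm]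
  have hinj : Function.Injective ψ := by
    rw [injective_iff_map_eq_zero]
    intro p hp
    have hnd := traceForm_nondegenerate F K
    have h0 : ∀ q : K × K, Algebra.trace F K (p.1 * q.2 - p.2 * q.1) = 0 := by
      intro q
      rw [← hform, hp]; simp
    apply Prod.ext
    · apply hnd.1
      intro y
      simpa [Algebra.traceForm_apply] using h0 (0, y)
    · apply hnd.1
      intro y
      simpa [Algebra.traceForm_apply] using h0 (y, 0)
  have hfr : Module.finrank F (K × K) = Module.finrank F V := by
    rw [Module.finrank_prod, hK, hdim]; ring
  exact ⟨LinearEquiv.ofInjectiveOfFinrankEq ψ hinj hfr, fun p q => by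
    exact hform p q⟩

theorem affine_plane_of_spread {F V K I : Type*} [Field F] [AddCommGroup V] [Module F V] [Finite V]
    [AddCommGroup K] [Module F K] [Finite K] [Finite I] (q : ℕ) (hq : 1 < q)
    (hcK : Nat.card K = q) (hcI : Nat.card I = q + 1)
    (g : I → V →ₗ[F] K) (hs : ∀ i, Function.Surjective (g i))
    (hcL : ∀ i, Nat.card (LinearMap.ker (g i)) = q)
    (hu : ∀ v, v ≠ 0 → ∃! i, g i v = 0) :
    (Set.range fun i => LinearMap.ker (g i)).ncard = q + 1 ∧
    (∀ v : V, v ≠ 0 → ∃! L, L ∈ (Set.range fun i => LinearMap.ker (g i)) ∧ v ∈ L) ∧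
      {A : Set V | ∃ v : V, ∃ L ∈ (Set.range fun i => LinearMap.ker (g i)),
          A = (fun x => v + x) '' (L : Set V)}.ncard = q * (q + 1) ∧
      (∀ A ∈ {A : Set V | ∃ v : V, ∃ L ∈ (Set.range fun i => LinearMap.ker (g i)),
          A = (fun x => v + x) '' (L : Set V)},
        A.ncard = q) ∧
      (∀ x y : V, x ≠ y →
        ∃! A : Set V,
          (A ∈ {A : Set V | ∃ v : V, ∃ L ∈ (Set.range fun i => LinearMap.ker (g i)),
            A = (fun x => v + x) '' (L : Set V)}) ∧
          x ∈ A ∧ y ∈ A) := by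
  have hcoset : ∀ v i, (fun x => v + x) '' (LinearMap.ker (g i) : Set V) = {x | g i x = g i v} := by
    intro v i
    ext x
    simp only [Set.mem_image, SetLike.mem_coe, LinearMap.mem_ker, Set.mem_ofPred_eq]
    constructor
    · rintro ⟨y, hy, rfl⟩; simp [hy]
    · intro h; exact ⟨x - v, by simp [h], by abel⟩
  have hkinj : Function.Injective fun i => LinearMap.ker (g i) := by
    intro i j hij
    have hnt : Nontrivial (LinearMap.ker (g i)) := by
      rw [← Finite.one_lt_card_iff_nontrivial, hcL]; exact hq
    obtain ⟨⟨v, hv⟩, hv0⟩ := exists_ne (0 : LinearMap.ker (g i))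
    have hv0' : v ≠ 0 := fun h => hv0 (Subtype.ext h)
    have hv' : v ∈ LinearMap.ker (g j) := by
      have : LinearMap.ker (g i) = LinearMap.ker (g j) := hij
      rwa [← this]
    exact (hu v hv0').unique hv hv'
  have hset : {A : Set V | ∃ v : V, ∃ L ∈ (Set.range fun i => LinearMap.ker (g i)),
      A = (fun x => v + x) '' (L : Set V)} =
      Set.range fun p : K × I => {x | g p.2 x = p.1} := by
    ext A
    constructor
    · rintro ⟨v, _, ⟨i, rfl⟩, rfl⟩
      exact ⟨(g i v, i), (hcoset v i).symm⟩
    · rintro ⟨⟨c, i⟩, rfl⟩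
      obtain ⟨v, rfl⟩ := hs i c
      exact ⟨v, _, ⟨i, rfl⟩, (hcoset v i).symm⟩
  have hfinj : Function.Injective fun p : K × I => {x | g p.2 x = p.1} := by
    rintro ⟨c, i⟩ ⟨d, j⟩ h
    have h' : ∀ x, g i x = c ↔ g j x = d := fun x => Set.ext_iff.1 h x
    obtain ⟨v, hv⟩ := hs i c
    have hv' := (h' v).1 hv
    have hij : i = j := by
      apply hkinj
      ext x
      have := h' (x + v)
      simpa [hv, hv'] using this
    subst hij
    rw [← hv, ← hv']
  refine ⟨?_, ?_, ?_, ?_, ?_⟩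
  · rw [← Nat.card_coe_set_eq, Nat.card_range_of_injective hkinj, hcI]
  · intro v hv
    obtain ⟨i, hi, hi'⟩ := hu v hv
    refine ⟨_, ⟨⟨i, rfl⟩, hi⟩, ?_⟩
    rintro _ ⟨⟨j, rfl⟩, hj⟩
    rw [hi' j hj]
  · rw [hset, ← Nat.card_coe_set_eq, Nat.card_range_of_injective hfinj, Nat.card_prod, hcI, hcK]
  · rintro _ ⟨v, _, ⟨i, rfl⟩, rfl⟩
    rw [Set.ncard_image_of_injective _ (add_right_injective v), ← Nat.card_coe_set_eq]
    exact hcL i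
  · intro x y hxy
    rw [hset]
    obtain ⟨i, hi, hi'⟩ := hu (x - y) (sub_ne_zero.2 hxy)
    refine ⟨{z | g i z = g i x}, ⟨⟨(g i x, i), rfl⟩, rfl, ?_⟩, ?_⟩
    · simp only [map_sub, sub_eq_zero] at hi
      exact hi.symm
    · rintro _ ⟨⟨⟨c, j⟩, rfl⟩, hx, hy⟩
      have hx' : g j x = c := hx
      have hy' : g j y = c := hy
      have : j = i := hi' j (by simp [hx', hy'])
      subst this
      simp [hx']

/-- The linear functional whose kernel is a line through the origin in the plane. -/
def slopeMap (F K : Type*) [Field F] [Field K] [Algebra F K] : Option K → (K × K →ₗ[F] K)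
  | none => LinearMap.fst F K K
  | some m => LinearMap.snd F K K - (LinearMap.mulLeft F m).comp (LinearMap.fst F K K)

/-- Every symplectic `2J`-dimensional space over `F_P` admits a
symplectic spread: `P^J + 1` Lagrangian subspaces partitioning the nonzero
vectors; the cosets of its members form an affine plane of order `P^J`. -/
theorem symplectic_spread_exists
    {P J : ℕ} [Fact (Nat.Prime P)] (hJ : 0 < J)
    {V : Type*} [AddCommGroup V] [Module (ZMod P) V] [Fintype V]
    (hdim : Module.finrank (ZMod P) V = 2 * J)
    (B : V →ₗ[ZMod P] V →ₗ[ZMod P] ZMod P) (hB : IsSymplectic B) :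
    ∃ 𝒜 : Set (Submodule (ZMod P) V),
      𝒜.ncard = P ^ J + 1 ∧
      (∀ L ∈ 𝒜, IsLagrangian B L) ∧
      (∀ v : V, v ≠ 0 → ∃! L, L ∈ 𝒜 ∧ v ∈ L) ∧
      {A : Set V | ∃ v : V, ∃ L ∈ 𝒜,
          A = (fun x => v + x) '' (L : Set V)}.ncard = P ^ J * (P ^ J + 1) ∧
      (∀ A ∈ {A : Set V | ∃ v : V, ∃ L ∈ 𝒜, A = (fun x => v + x) '' (L : Set V)},
        A.ncard = P ^ J) ∧
      (∀ x y : V, x ≠ y →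
        ∃! A : Set V,
          (A ∈ {A : Set V | ∃ v : V, ∃ L ∈ 𝒜, A = (fun x => v + x) '' (L : Set V)}) ∧
          x ∈ A ∧ y ∈ A) := by
  classical
  have hJ0 : J ≠ 0 := hJ.ne'
  let K := GaloisField P J
  have hK : Module.finrank (ZMod P) K = J := GaloisField.finrank P hJ0
  have hcK : Nat.card K = P ^ J := GaloisField.card P J hJ0
  have : Finite K := inferInstance
  obtain ⟨φ, hφ⟩ := exists_model (K := K) B hB J hdim hK
  let g : Option K → V →ₗ[ZMod P] K := fun o => (slopeMap (ZMod P) K o).comp φ.symm.toLinearMap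
  have hg : ∀ o p, g o (φ p) = slopeMap (ZMod P) K o p := fun o p => by simp [g]
  have hs : ∀ o, Function.Surjective (g o) := by
    rintro (_ | m) y
    · exact ⟨φ (y, 0), by rw [hg]; simp [slopeMap]⟩
    · exact ⟨φ (0, y), by rw [hg]; simp [slopeMap]⟩
  have hcL : ∀ o, Nat.card (LinearMap.ker (g o)) = P ^ J := by
    intro o
    have h1 := LinearMap.finrank_range_add_finrank_ker (g o)
    rw [LinearMap.range_eq_top.2 (hs o), finrank_top, hK, hdim] at h1
    rw [Module.natCard_eq_pow_finrank (K := ZMod P), Nat.card_zmod]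
    congr 1
    omega
  have hu : ∀ v, v ≠ 0 → ∃! o, g o v = 0 := by
    intro v hv
    obtain ⟨⟨x, y⟩, rfl⟩ := φ.surjective v
    by_cases hx : x = 0
    · subst hx
      refine ⟨none, by simp only [hg]; simp [slopeMap], ?_⟩
      rintro (_ | m) h
      · rfl
      · rw [hg] at h
        simp [slopeMap] at h
        subst h
        exact absurd (map_zero φ) hv
    · refine ⟨some (y / x), by simp only [hg]; simp [slopeMap, div_mul_cancel₀ y hx], ?_⟩
      rintro (_ | m) h
      · rw [hg] at h
        exact absurd h hx
      · rw [hg] at h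
        simp [slopeMap, sub_eq_zero] at h
        rw [h, mul_div_cancel_right₀ _ hx]
  have hnd : ∀ a : K, (∀ x, Algebra.trace (ZMod P) K (x * a) = 0) → a = 0 := by
    intro a ha
    apply (traceForm_nondegenerate (ZMod P) K).1
    intro y
    rw [Algebra.traceForm_apply, mul_comm]
    exact ha y
  have hlag : ∀ o, IsLagrangian B (LinearMap.ker (g o)) := by
    intro o
    ext w
    obtain ⟨⟨x, y⟩, rfl⟩ := φ.surjective w
    simp only [sympPerp, SetLike.mem_coe, LinearMap.mem_ker, Set.mem_ofPred_eq, hg]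
    constructor
    · intro h v hv
      obtain ⟨⟨x', y'⟩, rfl⟩ := φ.surjective v
      rw [hg] at hv
      rw [hφ]
      rcases o with _ | m
      · have h1 : x = 0 := h
        have h2 : x' = 0 := hv
        simp [h1, h2]
      · have h1 : y - m * x = 0 := h
        have h2 : y' - m * x' = 0 := hv
        have h3 : x' * y - y' * x = 0 := by linear_combination x' * h1 - x * h2
        show Algebra.trace (ZMod P) K (x' * y - y' * x) = 0
        rw [h3, map_zero]
    · intro h
      rcases o with _ | m
      · show x = 0
        apply hnd
        intro z
        have := h (φ (0, z)) (by rw [hg]; rfl)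
        rw [hφ] at this
        simpa using this
      · show y - m * x = 0
        apply hnd
        intro z
        have := h (φ (z, m * z)) (by rw [hg]; simp [slopeMap])
        rw [hφ] at this
        rw [← this]
        congr 1
        ring
  have hcI : Nat.card (Option K) = P ^ J + 1 := by
    rw [Finite.card_option, hcK]
  obtain ⟨h1, h2, h3, h4, h5⟩ := affine_plane_of_spread (P ^ J)
    (Nat.one_lt_pow hJ0 (Fact.out : P.Prime).one_lt) hcK hcI g hs hcL hu
  refine ⟨Set.range fun o => LinearMap.ker (g o), h1, ?_, h2, h3, h4, h5⟩
  rintro _ ⟨o, rfl⟩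
  exact hlag o
end
end

section
/- Let B be a symplectic form on a 2J-dimensional vector space V over the field F_2 with two elements. If S ⊆ V satisfies B(v₁, v₂) = 1 for all v₁, v₂ ∈ S with v₁ ≠ v₂, then #S ≤ 2J + 1. -/
noncomputable section

/-- If `B` is a symplectic form on a `2J`-dimensional space over
`F₂` and `S` is a set of vectors with `B(v₁,v₂) = 1` for all distinct
`v₁, v₂ ∈ S`, then `#S ≤ 2J + 1`. -/
theorem pairwise_nonorthogonal_set_card_le
    {J : ℕ}
    {V : Type*} [AddCommGroup V] [Module (ZMod 2) V] [Fintype V] [DecidableEq V]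
    (hdim : Module.finrank (ZMod 2) V = 2 * J)
    (B : V →ₗ[ZMod 2] V →ₗ[ZMod 2] ZMod 2) (hB : IsSymplectic B)
    (S : Finset V) (hS : ∀ v₁ ∈ S, ∀ v₂ ∈ S, v₁ ≠ v₂ → B v₁ v₂ = 1) :
    S.card ≤ 2 * J + 1 := by
  have hli : LinearIndependent (ZMod 2) (fun v : S => ((v : V), (1 : ZMod 2))) := by
    rw [Fintype.linearIndependent_iff]
    intro c hc w
    have h1 : ∑ v : S, c v • (v : V) = 0 := by
      have := congrArg (LinearMap.fst (ZMod 2) V (ZMod 2)) hc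
      simpa [map_sum] using this
    have h2 : ∑ v : S, c v = 0 := by
      have := congrArg (LinearMap.snd (ZMod 2) V (ZMod 2)) hc
      simpa [map_sum] using this
    have h3 : ∑ v : S, c v * B (w : V) (v : V) = 0 := by
      have := congrArg (B (w : V)) h1
      simpa only [map_sum, map_smul, smul_eq_mul, map_zero] using this
    have h4 : ∑ v : S, (c v - c v * B (w : V) (v : V)) = c w := by
      rw [Finset.sum_eq_single w]
      · simp [hB.1]
      · intro v _ hv
        rw [hS w w.2 v v.2 (fun h => hv (Subtype.ext h.symm))]
        simp
      · simp
    rw [← h4, Finset.sum_sub_distrib, h2, h3, sub_zero]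
  have := hli.fintype_card_le_finrank
  simpa [hdim] using this
end
end

section
/- Let B be a symplectic form on a 2J-dimensional vector space V over F_2 and let Q be a quadratic form yielding B, with quadric 𝒬. Then the translates v + 𝒬 (v ∈ V) are pairwise distinct, each translate v + 𝒬 is an affine quadric, and conversely every affine quadric of cardinality #𝒬 equals v + 𝒬 for some v ∈ V. Since quadratic forms yielding B of both signs exist, there are consequently exactly 2^{2J} affine quadrics of each of the two sizes 2^{J−1}(2^J+1) and 2^{J−1}(2^J−1). -/
noncomputable section

/-- `Q` is a quadratic form yielding the bilinear form `B` over `F₂`. -/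
def YieldsForm {V : Type*} [AddCommGroup V] [Module (ZMod 2) V]
    (B : V →ₗ[ZMod 2] V →ₗ[ZMod 2] ZMod 2) (Q : V → ZMod 2) : Prop :=
  ∀ v₁ v₂ : V, Q (v₁ + v₂) + Q v₁ + Q v₂ = B v₁ v₂

/-- The quadric of a quadratic form: its set of zeros. -/
def quadric {V : Type*} (Q : V → ZMod 2) : Set V := {v | Q v = 0}

/-- A subset is an affine quadric if it or its complement is the quadric of
some quadratic form yielding `B`. -/
def IsAffineQuadric {V : Type*} [AddCommGroup V] [Module (ZMod 2) V]
    (B : V →ₗ[ZMod 2] V →ₗ[ZMod 2] ZMod 2) (D : Set V) : Prop :=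
  ∃ Q : V → ZMod 2, YieldsForm B Q ∧ (D = quadric Q ∨ D = (quadric Q)ᶜ)


def chi (x : ZMod 2) : ℤ := if x = 0 then 1 else -1

theorem chi_add : ∀ x y : ZMod 2, chi (x + y) = chi x * chi y := by decide

theorem chi_ne : ∀ x : ZMod 2, x ≠ 0 → chi x = -1 := by decide

theorem z2cases : ∀ x : ZMod 2, x = 0 ∨ x = 1 := by decide

theorem z2self (x : ZMod 2) : x + x = 0 := CharTwo.add_self_eq_zero x

theorem z2ne : ∀ x : ZMod 2, x ≠ 0 ↔ x = 1 := by decide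

section
variable {V : Type*} [AddCommGroup V] [Module (ZMod 2) V]
  {B : V →ₗ[ZMod 2] V →ₗ[ZMod 2] ZMod 2} {Q : V → ZMod 2}

theorem vself (v : V) : v + v = 0 := ZModModule.add_self v

theorem Q_add (hQ : YieldsForm B Q) (a x : V) : Q (a + x) = Q a + Q x + B a x := by
  rw [← hQ a x]
  have h1 := z2self (Q a)
  have h2 := z2self (Q x)
  linear_combination -h1 - h2

theorem mem_tr (v x : V) : x ∈ (fun x => v + x) '' quadric Q ↔ Q (v + x) = 0 := by
  constructor
  · rintro ⟨y, hy, rfl⟩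
    have : v + (v + y) = y := by rw [← add_assoc, vself, zero_add]
    change Q (v + (v + y)) = 0
    rw [this]
    exact hy
  · intro h
    exact ⟨v + x, h, by simp [← add_assoc, vself]⟩

theorem tr_inj (hB : IsSymplectic B) (hQ : YieldsForm B Q) (v w : V)
    (h : (fun x => v + x) '' quadric Q = (fun x => w + x) '' quadric Q) : v = w := by
  have key : ∀ x, Q (v + x) = Q (w + x) := by
    intro x
    have := congrArg (x ∈ ·) h
    simp only [mem_tr, eq_iff_iff] at this
    rcases z2cases (Q (v + x)) with h1 | h1 <;> rcases z2cases (Q (w + x)) with h2 | h2 <;>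
      simp_all
  have h0 : Q v = Q w := by simpa using key 0
  by_contra hne
  obtain ⟨x, hx⟩ := hB.2 (v - w) (sub_ne_zero.mpr hne)
  apply hx
  have := key x
  rw [Q_add hQ, Q_add hQ, h0] at this
  rw [map_sub, LinearMap.sub_apply, sub_eq_zero]
  exact add_left_cancel this

theorem tr_aff (hQ : YieldsForm B Q) (v : V) :
    IsAffineQuadric B ((fun x => v + x) '' quadric Q) := by
  refine ⟨fun x => Q x + B v x, ?_, ?_⟩
  · intro a b
    have := hQ a b
    simp only [map_add]
    linear_combination this + z2self (B v a) + z2self (B v b)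
  · rcases z2cases (Q v) with h | h
    · left
      ext x
      rw [mem_tr, Q_add hQ, h]
      simp [quadric]
    · right
      ext x
      rw [mem_tr, Q_add hQ, h]
      simp only [quadric, Set.mem_compl_iff, Set.mem_ofPred_eq]
      generalize Q x = a
      generalize B v x = b
      revert a b
      decide

theorem compl_aff (D : Set V) (h : IsAffineQuadric B D) : IsAffineQuadric B Dᶜ := by
  obtain ⟨Q', h1, h2 | h2⟩ := h
  · exact ⟨Q', h1, Or.inr (by rw [h2])⟩
  · exact ⟨Q', h1, Or.inl (by rw [h2, compl_compl])⟩

theorem exists_a [Fintype V] (hB : IsSymplectic B) (hQ : YieldsForm B Q)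
    {Q' : V → ZMod 2} (hQ' : YieldsForm B Q') : ∃ a, ∀ x, Q' x = Q x + B a x := by
  let f : V →+ ZMod 2 := AddMonoidHom.mk' (fun x => Q' x - Q x) (by
    intro a b
    simp only [Q_add hQ, Q_add hQ']
    ring)
  have hinj : Function.Injective B := by
    rw [injective_iff_map_eq_zero]
    intro a ha
    by_contra hne
    obtain ⟨w, hw⟩ := hB.2 a hne
    exact hw (by rw [ha]; rfl)
  have hfin : Module.Finite (ZMod 2) V := Module.Finite.of_finite
  have hs : Function.Surjective B :=
    (LinearMap.injective_iff_surjective_of_finrank_eq_finrank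
      (Subspace.dual_finrank_eq (K := ZMod 2) (V := V)).symm).1 hinj
  obtain ⟨a, ha⟩ := hs (f.toZModLinearMap 2)
  refine ⟨a, fun x => ?_⟩
  rw [ha]
  change Q' x = Q x + (Q' x - Q x)
  ring

theorem aff_cases [Fintype V] (hB : IsSymplectic B) (hQ : YieldsForm B Q) (D : Set V)
    (hD : IsAffineQuadric B D) : ∃ v : V, D = (fun x => v + x) '' quadric Q ∨
      D = ((fun x => v + x) '' quadric Q)ᶜ := by
  obtain ⟨Q', h', hD⟩ := hD
  obtain ⟨a, ha⟩ := exists_a hB hQ h'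
  have : quadric Q' = (fun x => a + x) '' quadric Q ∨
      quadric Q' = ((fun x => a + x) '' quadric Q)ᶜ := by
    rcases z2cases (Q a) with h | h
    · left
      ext x
      rw [mem_tr, Q_add hQ, h]
      simp [quadric, ha]
    · right
      ext x
      rw [Set.mem_compl_iff, mem_tr, Q_add hQ, h]
      simp only [quadric, Set.mem_ofPred_eq, ha]
      generalize Q x = a
      generalize B _ x = b
      revert a b
      decide
  refine ⟨a, ?_⟩
  rcases hD with rfl | rfl <;> rcases this with h | h <;> rw [h] <;> simp

theorem sum_char [Fintype V] [DecidableEq V] (hB : IsSymplectic B) (u : V) :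
    ∑ v, chi (B u v) = if u = 0 then (Fintype.card V : ℤ) else 0 := by
  split_ifs with h
  · simp [h, chi]
  · obtain ⟨w, hw⟩ := hB.2 u h
    have := Equiv.sum_comp (Equiv.addLeft w) (fun v => chi (B u v))
    simp only [Equiv.coe_addLeft, map_add, chi_add, chi_ne _ hw, ← Finset.mul_sum] at this
    linarith

theorem sum_sq [Fintype V] [DecidableEq V] (hB : IsSymplectic B) (hQ : YieldsForm B Q) :
    (∑ v, chi (Q v)) ^ 2 = (Fintype.card V : ℤ) := by
  have h0 : Q 0 = 0 := by
    have := hQ 0 0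
    simpa [z2self] using this
  have h1 : ∀ v, ∑ w, chi (Q w) = ∑ u, chi (Q (u + v)) := fun v =>
    (Equiv.sum_comp (Equiv.addRight v) (fun w => chi (Q w))).symm
  have h2 : ∀ u v, chi (Q v) * chi (Q (u + v)) = chi (Q u) * chi (B u v) := by
    intro u v
    rw [← chi_add, ← chi_add]
    congr 1
    rw [Q_add hQ]
    linear_combination z2self (Q v)
  rw [sq, Finset.sum_mul]
  calc ∑ v, chi (Q v) * ∑ w, chi (Q w) = ∑ v, ∑ u, chi (Q u) * chi (B u v) := by
        refine Finset.sum_congr rfl fun v _ => ?_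
        rw [h1 v, Finset.mul_sum]
        exact Finset.sum_congr rfl fun u _ => h2 u v
    _ = ∑ u, chi (Q u) * ∑ v, chi (B u v) := by
        rw [Finset.sum_comm]
        simp [Finset.mul_sum]
    _ = _ := by
        have : chi 0 = 1 := by decide
        simp [sum_char hB, h0, this]

theorem sum_eq [Fintype V] :
    ∑ v, chi (Q v) = ((quadric Q).ncard : ℤ) - ((quadric Q)ᶜ.ncard : ℤ) := by
  classical
  have e1 : quadric Q = ((Finset.univ.filter fun v => Q v = 0 : Finset V) : Set V) := by
    ext; simp [quadric]
  have e2 : (quadric Q)ᶜ = ((Finset.univ.filter fun v => ¬ Q v = 0 : Finset V) : Set V) := by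
    ext; simp [quadric]
  rw [e2, e1, Set.ncard_coe_finset, Set.ncard_coe_finset]
  simp only [chi, Finset.sum_ite, Finset.sum_const]
  simp
  ring

theorem sizes [Fintype V] [DecidableEq V] {J : ℕ} (hJ : 0 < J)
    (hdim : Module.finrank (ZMod 2) V = 2 * J) (hB : IsSymplectic B) (hQ : YieldsForm B Q) :
    ((quadric Q).ncard = 2 ^ (J - 1) * (2 ^ J + 1) ∧
      (quadric Q)ᶜ.ncard = 2 ^ (J - 1) * (2 ^ J - 1)) ∨
    ((quadric Q).ncard = 2 ^ (J - 1) * (2 ^ J - 1) ∧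
      (quadric Q)ᶜ.ncard = 2 ^ (J - 1) * (2 ^ J + 1)) := by
  have hc : Fintype.card V = 2 ^ (2 * J) := by
    rw [Module.card_eq_pow_finrank (K := ZMod 2), hdim, ZMod.card]
  have h1 := Set.ncard_add_ncard_compl (quadric Q)
  have h2 := sum_sq hB hQ
  rw [sum_eq, hc] at h2
  rw [Nat.card_eq_fintype_card, hc] at h1
  generalize (quadric Q).ncard = a at *
  generalize (quadric Q)ᶜ.ncard = b at *
  obtain ⟨k, rfl⟩ : ∃ k, J = k + 1 := ⟨J - 1, by omega⟩
  have h3 : ((a : ℤ) - b) ^ 2 = (2 * 2 ^ k) ^ 2 := by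
    rw [h2]; push_cast; ring
  have h1' : (a : ℤ) + b = 4 * (2 ^ k * 2 ^ k) := by
    have : ((a + b : ℕ) : ℤ) = ((2 ^ (2 * (k + 1)) : ℕ) : ℤ) := by rw [h1]
    push_cast at this
    rw [this]; ring
  have hp : 1 ≤ 2 ^ (k + 1) := Nat.one_le_two_pow
  simp only [Nat.add_sub_cancel]
  zify [hp]
  rw [pow_succ]
  rcases sq_eq_sq_iff_eq_or_eq_neg.1 h3 with h | h
  · left
    constructor <;> linarith
  · right
    constructor <;> linarith

theorem tr_ncard (v : V) : ((fun x => v + x) '' quadric Q).ncard = (quadric Q).ncard :=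
  Set.ncard_image_of_injective _ (add_right_injective v)

theorem trc_ncard [Fintype V] (v : V) :
    ((fun x => v + x) '' quadric Q)ᶜ.ncard = (quadric Q)ᶜ.ncard := by
  have h1 := Set.ncard_add_ncard_compl (quadric Q)
  have h2 := Set.ncard_add_ncard_compl ((fun x => v + x) '' quadric Q)
  rw [tr_ncard] at h2
  omega

theorem count [Fintype V] (hB : IsSymplectic B) (hQ : YieldsForm B Q)
    (hne : (quadric Q).ncard ≠ (quadric Q)ᶜ.ncard) :
    {D : Set V | IsAffineQuadric B D ∧ D.ncard = (quadric Q).ncard}.ncard = Fintype.card V ∧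
    {D : Set V | IsAffineQuadric B D ∧ D.ncard = (quadric Q)ᶜ.ncard}.ncard
      = Fintype.card V := by
  constructor
  · have : {D : Set V | IsAffineQuadric B D ∧ D.ncard = (quadric Q).ncard} =
        (fun v : V => (fun x => v + x) '' quadric Q) '' Set.univ := by
      ext D
      constructor
      · rintro ⟨h1, h2⟩
        obtain ⟨v, h | h⟩ := aff_cases hB hQ D h1
        · exact ⟨v, trivial, h.symm⟩
        · rw [h, trc_ncard] at h2
          exact absurd h2.symm hne
      · rintro ⟨v, -, rfl⟩
        exact ⟨tr_aff hQ v, tr_ncard v⟩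
    rw [this, Set.ncard_image_of_injective _ (fun v w h => tr_inj hB hQ v w h),
      Set.ncard_univ, Nat.card_eq_fintype_card]
  · have : {D : Set V | IsAffineQuadric B D ∧ D.ncard = (quadric Q)ᶜ.ncard} =
        (fun v : V => ((fun x => v + x) '' quadric Q)ᶜ) '' Set.univ := by
      ext D
      constructor
      · rintro ⟨h1, h2⟩
        obtain ⟨v, h | h⟩ := aff_cases hB hQ D h1
        · rw [h, tr_ncard] at h2
          exact absurd h2 hne
        · exact ⟨v, trivial, h.symm⟩
      · rintro ⟨v, -, rfl⟩
        exact ⟨compl_aff _ (tr_aff hQ v), trc_ncard v⟩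
    rw [this, Set.ncard_image_of_injective _
      (fun v w h => tr_inj hB hQ v w (compl_injective h)),
      Set.ncard_univ, Nat.card_eq_fintype_card]

end

/-- The translates of the quadric of a quadratic form yielding `B`
are pairwise distinct affine quadrics, every affine quadric of the same size is
such a translate, and there are exactly `2^{2J}` affine quadrics of each of the
two possible sizes `2^{J−1}(2^J+1)` and `2^{J−1}(2^J−1)`. -/
theorem affine_quadrics_are_translates
    {J : ℕ} (hJ : 0 < J)
    {V : Type*} [AddCommGroup V] [Module (ZMod 2) V] [Fintype V] [DecidableEq V]
    (hdim : Module.finrank (ZMod 2) V = 2 * J)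
    (B : V →ₗ[ZMod 2] V →ₗ[ZMod 2] ZMod 2) (hB : IsSymplectic B)
    (Q : V → ZMod 2) (hQ : YieldsForm B Q) :
    (∀ v w : V,
      (fun x => v + x) '' quadric Q = (fun x => w + x) '' quadric Q → v = w) ∧
    (∀ v : V, IsAffineQuadric B ((fun x => v + x) '' quadric Q)) ∧
    (∀ D : Set V, IsAffineQuadric B D → D.ncard = (quadric Q).ncard →
      ∃ v : V, D = (fun x => v + x) '' quadric Q) ∧
    {D : Set V | IsAffineQuadric B D ∧
      D.ncard = 2 ^ (J - 1) * (2 ^ J + 1)}.ncard = 2 ^ (2 * J) ∧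
    {D : Set V | IsAffineQuadric B D ∧
      D.ncard = 2 ^ (J - 1) * (2 ^ J - 1)}.ncard = 2 ^ (2 * J) := by
  have hc : Fintype.card V = 2 ^ (2 * J) := by
    rw [Module.card_eq_pow_finrank (K := ZMod 2), hdim, ZMod.card]
  have hs := sizes hJ hdim hB hQ
  have hlt : 2 ^ (J - 1) * (2 ^ J - 1) < 2 ^ (J - 1) * (2 ^ J + 1) :=
    Nat.mul_lt_mul_of_pos_left
      (Nat.lt_succ_of_le (Nat.sub_le _ _)) (by positivity)
  have hne : (quadric Q).ncard ≠ (quadric Q)ᶜ.ncard := by omega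
  obtain ⟨c1, c2⟩ := count hB hQ hne
  refine ⟨tr_inj hB hQ, tr_aff hQ, ?_, ?_⟩
  · intro D h1 h2
    obtain ⟨v, h | h⟩ := aff_cases hB hQ D h1
    · exact ⟨v, h⟩
    · rw [h, trc_ncard] at h2
      exact absurd h2.symm hne
  · rcases hs with ⟨s1, s2⟩ | ⟨s1, s2⟩
    · rw [← s1, ← s2, ← hc]
      exact ⟨c1, c2⟩
    · rw [← s1, ← s2, ← hc]
      exact ⟨c2, c1⟩
end
end

section
/- Let B be a symplectic form on a 2J-dimensional vector space V over F_2 and Q a quadratic form yielding B, with quadric 𝒬. (i) For every linear automorphism A of V preserving B there exists a unique vector v_A ∈ 𝒬 such that Q(Av + v_A) = Q(v) for all v ∈ V. (ii) The induced action is doubly transitive both on 𝒬 and on its complement: for any q₁ ≠ q₂ and q₃ ≠ q₄ all lying in 𝒬 (respectively, all lying in V ∖ 𝒬), there exist a B-preserving linear automorphism A of V and a vector w ∈ V such that Q(Av + w) = Q(v) for all v ∈ V, A·q₁ + w = q₃, and A·q₂ + w = q₄. -/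
noncomputable section

namespace AffSymp

def sg (x : ZMod 2) : ℤ := if x = 0 then 1 else -1

lemma sg_add : ∀ x y : ZMod 2, sg (x + y) = sg x * sg y := by decide

lemma z2 : ∀ x : ZMod 2, x ≠ 0 → x = 1 := by decide

variable {V : Type*} [AddCommGroup V] [Module (ZMod 2) V]

lemma vadd_self (v : V) : v + v = 0 := by
  have : ((1 : ZMod 2) + 1) • v = 0 := by
    rw [show (1 : ZMod 2) + 1 = 0 from by decide, zero_smul]
  simpa [add_smul] using this

lemma Q_add {B : V →ₗ[ZMod 2] V →ₗ[ZMod 2] ZMod 2} {Q : V → ZMod 2} (hQ : YieldsForm B Q)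
    (x y : V) : Q (x + y) = Q x + Q y + B x y := by
  have h := hQ x y
  rw [← h]
  generalize Q (x + y) = a
  generalize Q x = b
  generalize Q y = c
  revert a b c; decide

lemma Q_zero {B : V →ₗ[ZMod 2] V →ₗ[ZMod 2] ZMod 2} {Q : V → ZMod 2} (hQ : YieldsForm B Q) :
    Q 0 = 0 := by
  have h := Q_add hQ 0 0
  simp at h
  exact h

lemma B_symm {B : V →ₗ[ZMod 2] V →ₗ[ZMod 2] ZMod 2} {Q : V → ZMod 2} (hQ : YieldsForm B Q)
    (x y : V) : B x y = B y x := by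
  rw [← hQ x y, ← hQ y x, add_comm x y]; ring

lemma char_sum [Fintype V] {B : V →ₗ[ZMod 2] V →ₗ[ZMod 2] ZMod 2} (h y : V) (hy : B y h ≠ 0) :
    ∑ x : V, sg (B x h) = 0 := by
  have e : ∑ x : V, sg (B x h) = ∑ x : V, sg (B (x + y) h) :=
    (Equiv.sum_comp (Equiv.addRight y) (fun x => sg (B x h))).symm
  have e2 : ∑ x : V, sg (B (x + y) h) = - ∑ x : V, sg (B x h) := by
    rw [← Finset.sum_neg_distrib]
    refine Finset.sum_congr rfl fun x _ => ?_
    rw [map_add, LinearMap.add_apply, sg_add, z2 _ hy]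
    simp [sg]
  linarith

lemma gauss [Fintype V] {B : V →ₗ[ZMod 2] V →ₗ[ZMod 2] ZMod 2} (hB : IsSymplectic B)
    {Q : V → ZMod 2} (hQ : YieldsForm B Q) : ∑ x : V, sg (Q x) ≠ 0 := by
  classical
  have key : (∑ x : V, sg (Q x)) * (∑ x : V, sg (Q x)) = Fintype.card V := by
    calc (∑ x : V, sg (Q x)) * (∑ x : V, sg (Q x))
        = ∑ x : V, ∑ h : V, sg (Q x) * sg (Q (x + h)) := by
          rw [Finset.sum_mul]
          refine Finset.sum_congr rfl fun x _ => ?_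
          rw [← Finset.mul_sum]
          congr 1
          exact (Equiv.sum_comp (Equiv.addLeft x) (fun y => sg (Q y))).symm
      _ = ∑ h : V, sg (Q h) * ∑ x : V, sg (B x h) := by
          rw [Finset.sum_comm]
          refine Finset.sum_congr rfl fun h _ => ?_
          rw [Finset.mul_sum]
          refine Finset.sum_congr rfl fun x _ => ?_
          rw [Q_add hQ, ← sg_add, ← sg_add]
          congr 1
          generalize Q x = a
          generalize Q h = b
          generalize B x h = c
          revert a b c; decide
      _ = sg (Q 0) * ∑ x : V, sg (B x 0) := by
          refine Finset.sum_eq_single 0 (fun h _ hh => ?_) (by simp)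
          obtain ⟨y, hy⟩ := hB.2 h hh
          rw [char_sum h y (by rwa [B_symm hQ]), mul_zero]
      _ = Fintype.card V := by
          simp [Q_zero hQ, sg]
  intro h0
  rw [h0] at key
  have : Fintype.card V ≠ 0 := Fintype.card_ne_zero
  rw [mul_zero] at key
  exact this (by exact_mod_cast key.symm)

lemma rep [Fintype V] {B : V →ₗ[ZMod 2] V →ₗ[ZMod 2] ZMod 2} (hB : IsSymplectic B)
    (l : V →ₗ[ZMod 2] ZMod 2) : ∃ w, B w = l := by
  have inj : Function.Injective B := by
    rw [injective_iff_map_eq_zero]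
    intro a ha
    by_contra hne
    obtain ⟨w, hw⟩ := hB.2 a hne
    exact hw (by rw [ha]; rfl)
  have : Function.Surjective B :=
    (LinearMap.injective_iff_surjective_of_finrank_eq_finrank
      (Subspace.dual_finrank_eq (K := ZMod 2) (V := V)).symm).1 inj
  exact this l

lemma part1 [Fintype V] {B : V →ₗ[ZMod 2] V →ₗ[ZMod 2] ZMod 2} (hB : IsSymplectic B)
    {Q : V → ZMod 2} (hQ : YieldsForm B Q) (A : V ≃ₗ[ZMod 2] V)
    (hA : ∀ x y : V, B (A x) (A y) = B x y) :
    ∃! vA : V, vA ∈ quadric Q ∧ ∀ v : V, Q (A v + vA) = Q v := by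
  let l0 : V →+ ZMod 2 :=
    { toFun := fun v => Q v + Q (A v)
      map_zero' := by simp [Q_zero hQ]
      map_add' := by
        intro x y
        rw [map_add, Q_add hQ, Q_add hQ, hA]
        generalize Q x = a
        generalize Q y = b
        generalize B x y = c
        generalize Q (A x) = d
        generalize Q (A y) = e
        revert a b c d e; decide }
  let l : V →ₗ[ZMod 2] ZMod 2 := l0.toZModLinearMap 2
  obtain ⟨w, hw⟩ := rep hB (l ∘ₗ (A.symm : V →ₗ[ZMod 2] V))
  have hw' : ∀ v, B (A v) w = Q v + Q (A v) := by
    intro v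
    rw [B_symm hQ, hw]
    simp [l, l0]
  have h1 : ∀ v, Q (A v + w) = Q v + Q w := by
    intro v
    rw [Q_add hQ, hw']
    generalize Q (A v) = a
    generalize Q v = b
    generalize Q w = c
    revert a b c; decide
  have hsum : ∑ v : V, sg (Q v) = sg (Q w) * ∑ v : V, sg (Q v) := by
    calc ∑ v : V, sg (Q v) = ∑ v : V, sg (Q (A v + w)) :=
          (Equiv.sum_comp (A.toEquiv.trans (Equiv.addRight w)) (fun v => sg (Q v))).symm
      _ = _ := by
          rw [Finset.mul_sum]
          refine Finset.sum_congr rfl fun v _ => ?_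
          rw [h1, sg_add, mul_comm]
  have hQw : Q w = 0 := by
    by_contra hne
    have : sg (Q w) = -1 := by simp [sg, hne]
    rw [this] at hsum
    exact gauss hB hQ (by linarith)
  refine ⟨w, ⟨hQw, fun v => by rw [h1, hQw, add_zero]⟩, ?_⟩
  rintro w' ⟨hq, hw2⟩
  have hq : Q w' = 0 := hq
  by_contra hne
  obtain ⟨y, hy⟩ := hB.2 (w' - w) (sub_ne_zero.2 hne)
  apply hy
  rw [map_sub, LinearMap.sub_apply, sub_eq_zero, B_symm hQ, B_symm hQ w]
  obtain ⟨v, rfl⟩ := A.surjective y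
  have e1 := hw2 v
  rw [Q_add hQ, hq] at e1
  rw [hw', ← e1]
  generalize Q (A v) = a
  generalize B (A v) w' = b
  revert a b; decide

def Good (B : V →ₗ[ZMod 2] V →ₗ[ZMod 2] ZMod 2) (Q : V → ZMod 2) (f : V → V) : Prop :=
  ∃ (A : V ≃ₗ[ZMod 2] V) (w : V), (∀ x y : V, B (A x) (A y) = B x y) ∧
    (∀ v : V, Q (A v + w) = Q v) ∧ ∀ v, A v + w = f v

lemma Good.comp {B : V →ₗ[ZMod 2] V →ₗ[ZMod 2] ZMod 2} {Q : V → ZMod 2} {f g : V → V}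
    (hf : Good B Q f) (hg : Good B Q g) : Good B Q (fun v => f (g v)) := by
  obtain ⟨A, w, h1, h2, h3⟩ := hf
  obtain ⟨A', w', h1', h2', h3'⟩ := hg
  have e : ∀ v, (A'.trans A) v + (A w' + w) = A (A' v + w') + w := by
    intro v
    rw [map_add, add_assoc]; rfl
  refine ⟨A'.trans A, A w' + w, fun x y => ?_, fun v => ?_, fun v => ?_⟩
  · simp [h1, h1']
  · rw [e, h2, h2']
  · rw [e, h3, h3']

def tv (B : V →ₗ[ZMod 2] V →ₗ[ZMod 2] ZMod 2) (u : V) : V →ₗ[ZMod 2] V :=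
  LinearMap.id + (B u).smulRight u

lemma tv_apply (B : V →ₗ[ZMod 2] V →ₗ[ZMod 2] ZMod 2) (u v : V) :
    tv B u v = v + B u v • u := by simp [tv]

/-- affine transvection -/
lemma good_t {B : V →ₗ[ZMod 2] V →ₗ[ZMod 2] ZMod 2} (hB : IsSymplectic B)
    {Q : V → ZMod 2} (hQ : YieldsForm B Q) (u : V) :
    ∃ f, Good B Q f ∧ (∀ v, Q (v + u) = Q v → f v = v + u) ∧
      (∀ v, Q (v + u) ≠ Q v → f v = v) := by
  have inv : Function.Involutive (tv B u) := by
    intro v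
    rw [tv_apply, tv_apply, map_add, map_smul, hB.1, smul_zero, add_zero, add_assoc, vadd_self,
      add_zero]
  have two : ∀ x : ZMod 2, x = 0 ∨ x = 1 := by decide
  have key : ∀ v, (Q (v + u) = Q v → tv B u v + (Q u + 1) • u = v + u) ∧
      (Q (v + u) ≠ Q v → tv B u v + (Q u + 1) • u = v) := by
    intro v
    rw [tv_apply, add_assoc, ← add_smul, Q_add hQ, B_symm hQ v u]
    have h1 : ∀ a b c : ZMod 2, a + b + c = a → c + (b + 1) = 1 := by decide
    have h2 : ∀ a b c : ZMod 2, a + b + c ≠ a → c + (b + 1) = 0 := by decide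
    constructor
    · intro h; rw [h1 _ _ _ h, one_smul]
    · intro h; rw [h2 _ _ _ h, zero_smul, add_zero]
  refine ⟨fun v => tv B u v + (Q u + 1) • u, ⟨LinearEquiv.ofInvolutive (tv B u) inv,
    (Q u + 1) • u, fun x y => ?_, fun v => ?_, fun v => rfl⟩, fun v => (key v).1,
    fun v => (key v).2⟩
  · change B (tv B u x) (tv B u y) = B x y
    rw [tv_apply, tv_apply]
    simp only [map_add, map_smul, LinearMap.add_apply, LinearMap.smul_apply, hB.1, smul_eq_mul]
    rw [B_symm hQ x u]
    generalize B u x = a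
    generalize B u y = b
    generalize B x y = c
    revert a b c; decide
  · change Q (tv B u v + (Q u + 1) • u) = Q v
    by_cases h : Q (v + u) = Q v
    · rw [(key v).1 h, h]
    · rw [(key v).2 h]

lemma add_swap' (a b : V) : a + (a + b) = b := by
  rw [← add_assoc, vadd_self, zero_add]

/-- Move `a` to `b` while fixing `q`. -/
lemma step {B : V →ₗ[ZMod 2] V →ₗ[ZMod 2] ZMod 2} (hB : IsSymplectic B)
    {Q : V → ZMod 2} (hQ : YieldsForm B Q) (q a b : V) (hab : Q a = Q b)
    (h : Q (q + (a + b)) ≠ Q q) : ∃ f, Good B Q f ∧ f q = q ∧ f a = b := by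
  obtain ⟨f, hf, h1, h2⟩ := good_t hB hQ (a + b)
  refine ⟨f, hf, h2 q h, ?_⟩
  rw [h1 a (by rw [add_swap', hab]), add_swap']

lemma exists_dual {B : V →ₗ[ZMod 2] V →ₗ[ZMod 2] ZMod 2} (hB : IsSymplectic B)
    (a b : V) (ha : a ≠ 0) (hb : b ≠ 0) : ∃ c, B a c = 1 ∧ B b c = 1 := by
  obtain ⟨x, hx⟩ := hB.2 a ha
  obtain ⟨y, hy⟩ := hB.2 b hb
  have hx := z2 _ hx
  have hy := z2 _ hy
  by_cases h1 : B b x = 0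
  · by_cases h2 : B a y = 0
    · exact ⟨x + y, by rw [map_add, hx, h2, add_zero], by rw [map_add, hy, h1, zero_add]⟩
    · exact ⟨y, z2 _ h2, hy⟩
  · exact ⟨x, hx, z2 _ h1⟩

lemma stab {B : V →ₗ[ZMod 2] V →ₗ[ZMod 2] ZMod 2} (hB : IsSymplectic B)
    {Q : V → ZMod 2} (hQ : YieldsForm B Q) (q a b : V) (ha : Q a = Q q) (hb : Q b = Q q)
    (haq : a ≠ q) (hbq : b ≠ q) : ∃ f, Good B Q f ∧ f q = q ∧ f a = b := by
  by_cases h : Q (q + (a + b)) = Q q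
  swap
  · exact step hB hQ q a b (ha.trans hb.symm) h
  obtain ⟨a, rfl⟩ : ∃ a', a = q + a' := ⟨a - q, by abel⟩
  obtain ⟨b, rfl⟩ : ∃ b', b = q + b' := ⟨b - q, by abel⟩
  have ha0 : a ≠ 0 := by rintro rfl; simp at haq
  have hb0 : b ≠ 0 := by rintro rfl; simp at hbq
  have sum : ∀ x y : V, q + (q + x + (q + y)) = q + (x + y) := by
    intro x y
    have : q + x + (q + y) = (q + q) + (x + y) := by abel
    rw [this, vadd_self, zero_add]
  rw [sum] at h
  have hab0 : B a b = 0 := by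
    simp only [Q_add hQ, map_add] at h ha hb
    revert h ha hb
    generalize Q q = z1
    generalize Q a = z2
    generalize Q b = z3
    generalize B a b = z4
    generalize B q a = z5
    generalize B q b = z6
    revert z1 z2 z3 z4 z5 z6; decide
  have hc : ∃ c, B a c = 1 ∧ B b c = 1 ∧ Q (q + c) = Q q := by
    obtain ⟨c, h1, h2⟩ := exists_dual hB a b ha0 hb0
    by_cases hc : Q (q + c) = Q q
    · exact ⟨c, h1, h2, hc⟩
    · refine ⟨c + a, by rw [map_add, h1, hB.1, add_zero],
        by rw [map_add, h2, B_symm hQ b a, hab0, add_zero], ?_⟩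
      have h3 := B_symm hQ c a
      rw [h1] at h3
      simp only [Q_add hQ, map_add, h3] at hc ha ⊢
      revert hc ha
      generalize Q q = z1
      generalize Q a = z2
      generalize Q c = z3
      generalize B q a = z5
      generalize B q c = z6
      revert z1 z2 z3 z5 z6; decide
  obtain ⟨c, h1, h2, h3⟩ := hc
  have aux : ∀ x y : V, B x y = 1 → Q (q + x) = Q q → Q (q + y) = Q q →
      Q (q + (q + x + (q + y))) ≠ Q q := by
    intro x y hxy hx hy
    rw [sum]
    simp only [Q_add hQ, map_add, hxy] at hx hy ⊢
    revert hx hy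
    generalize Q q = z1
    generalize Q x = z2
    generalize Q y = z3
    generalize B q x = z5
    generalize B q y = z6
    revert z1 z2 z3 z5 z6; decide
  obtain ⟨f, hf, f1, f2⟩ := step hB hQ q (q + a) (q + c) (ha.trans h3.symm) (aux a c h1 ha h3)
  obtain ⟨g, hg, g1, g2⟩ := step hB hQ q (q + c) (q + b) (h3.trans hb.symm)
    (aux c b (by rw [B_symm hQ, h2]) h3 hb)
  exact ⟨_, hg.comp hf, by rw [f1, g1], by rw [f2, g2]⟩

lemma part2 {B : V →ₗ[ZMod 2] V →ₗ[ZMod 2] ZMod 2} (hB : IsSymplectic B)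
    {Q : V → ZMod 2} (hQ : YieldsForm B Q) (q₁ q₂ q₃ q₄ : V) (h12 : Q q₁ = Q q₂)
    (h13 : Q q₁ = Q q₃) (h14 : Q q₁ = Q q₄) (n12 : q₁ ≠ q₂) (n34 : q₃ ≠ q₄) :
    ∃ (A : V ≃ₗ[ZMod 2] V) (w : V),
        (∀ x y : V, B (A x) (A y) = B x y) ∧
        (∀ v : V, Q (A v + w) = Q v) ∧
        A q₁ + w = q₃ ∧ A q₂ + w = q₄ := by
  obtain ⟨f, hf, h1, -⟩ := good_t hB hQ (q₁ + q₃)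
  have hf1 : f q₁ = q₃ := by
    rw [h1 q₁ (by rw [add_swap', h13]), add_swap']
  have hfQ : Q (f q₂) = Q q₂ := by
    obtain ⟨A, w, -, a2, a3⟩ := hf
    rw [← a3, a2]
  have hfn : f q₂ ≠ q₃ := by
    rw [← hf1]
    obtain ⟨A, w, -, a2, a3⟩ := hf
    rw [← a3, ← a3]
    intro h
    exact n12 (A.injective (add_right_cancel h)).symm
  obtain ⟨g, hg, g1, g2⟩ := stab hB hQ q₃ (f q₂) q₄ (by rw [hfQ, ← h12, h13])
    (by rw [← h14, h13]) hfn n34.symm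
  obtain ⟨A, w, a1, a2, a3⟩ := hg.comp hf
  exact ⟨A, w, a1, a2, by rw [a3]; simp only [hf1, g1], by rw [a3]; simp only [g2]⟩

end AffSymp

/-- (i) for every `B`-preserving linear automorphism `A` there is
a unique `v_A` in the quadric with `Q(Av + v_A) = Q(v)` for all `v`; (ii) the
induced affine action is doubly transitive on the quadric and on its
complement. -/
theorem affine_symplectic_action_on_quadric
    {J : ℕ} (hJ : 0 < J)
    {V : Type*} [AddCommGroup V] [Module (ZMod 2) V] [Fintype V] [DecidableEq V]
    (hdim : Module.finrank (ZMod 2) V = 2 * J)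
    (B : V →ₗ[ZMod 2] V →ₗ[ZMod 2] ZMod 2) (hB : IsSymplectic B)
    (Q : V → ZMod 2) (hQ : YieldsForm B Q) :
    (∀ A : V ≃ₗ[ZMod 2] V, (∀ x y : V, B (A x) (A y) = B x y) →
      ∃! vA : V, vA ∈ quadric Q ∧ ∀ v : V, Q (A v + vA) = Q v) ∧
    (∀ q₁ q₂ q₃ q₄ : V,
      q₁ ∈ quadric Q → q₂ ∈ quadric Q → q₃ ∈ quadric Q → q₄ ∈ quadric Q →
      q₁ ≠ q₂ → q₃ ≠ q₄ →
      ∃ (A : V ≃ₗ[ZMod 2] V) (w : V),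
        (∀ x y : V, B (A x) (A y) = B x y) ∧
        (∀ v : V, Q (A v + w) = Q v) ∧
        A q₁ + w = q₃ ∧ A q₂ + w = q₄) ∧
    (∀ q₁ q₂ q₃ q₄ : V,
      q₁ ∉ quadric Q → q₂ ∉ quadric Q → q₃ ∉ quadric Q → q₄ ∉ quadric Q →
      q₁ ≠ q₂ → q₃ ≠ q₄ →
      ∃ (A : V ≃ₗ[ZMod 2] V) (w : V),
        (∀ x y : V, B (A x) (A y) = B x y) ∧
        (∀ v : V, Q (A v + w) = Q v) ∧
        A q₁ + w = q₃ ∧ A q₂ + w = q₄) := by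
  refine ⟨fun A hA => AffSymp.part1 hB hQ A hA, ?_, ?_⟩
  · intro q₁ q₂ q₃ q₄ h1 h2 h3 h4 n12 n34
    have h1 : Q q₁ = 0 := h1
    have h2 : Q q₂ = 0 := h2
    have h3 : Q q₃ = 0 := h3
    have h4 : Q q₄ = 0 := h4
    exact AffSymp.part2 hB hQ q₁ q₂ q₃ q₄ (h1.trans h2.symm) (h1.trans h3.symm)
      (h1.trans h4.symm) n12 n34
  · intro q₁ q₂ q₃ q₄ h1 h2 h3 h4 n12 n34
    have h1 : Q q₁ = 1 := AffSymp.z2 _ h1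
    have h2 : Q q₂ = 1 := AffSymp.z2 _ h2
    have h3 : Q q₃ = 1 := AffSymp.z2 _ h3
    have h4 : Q q₄ = 1 := AffSymp.z2 _ h4
    exact AffSymp.part2 hB hQ q₁ q₂ q₃ q₄ (h1.trans h2.symm) (h1.trans h3.symm)
      (h1.trans h4.symm) n12 n34
end
end

section
/- Let B be a symplectic form on a 2J-dimensional vector space V over F_2 and let Q be a quadratic form yielding B of positive sign, i.e., whose quadric 𝒬 has cardinality 2^{J−1}(2^J+1). Then: (i) every Lagrangian subspace L of V has exactly one coset v + L contained in 𝒬; and (ii) every (J−1)-dimensional subspace S of V with S ⊆ 𝒬 is contained in exactly three Lagrangian subspaces of V, exactly two of which are contained in 𝒬. -/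
noncomputable section

def chi2 (a : ZMod 2) : ℤ := if a = 0 then 1 else -1

theorem chi2_add : ∀ a b : ZMod 2, chi2 (a + b) = chi2 a * chi2 b := by decide

theorem chi2_ne : ∀ a : ZMod 2, a ≠ 0 → chi2 a = -1 := by decide

theorem chi2_eq : ∀ a : ZMod 2, chi2 a = 2 * (if a = 0 then 1 else 0) - 1 := by decide

theorem z2_ne : ∀ a : ZMod 2, a ≠ 0 → a = 1 := by decide

theorem z2_self : ∀ a : ZMod 2, a + a = 0 := by decide

theorem z2_cases : ∀ a : ZMod 2, a = 0 ∨ a = 1 := by decide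

theorem z2_move : ∀ a b c d : ZMod 2, a + b + c = d → a = b + c + d := by decide

theorem chi2_sum_zero {G : Type*} [AddCommGroup G] [Fintype G] (f : G → ZMod 2)
    (hf : ∀ x y, f (x + y) = f x + f y) (x0 : G) (h0 : f x0 ≠ 0) :
    ∑ x, chi2 (f x) = 0 := by
  have h1 : ∑ x, chi2 (f (x + x0)) = ∑ x, chi2 (f x) :=
    Equiv.sum_comp (Equiv.addRight x0) (fun x => chi2 (f x))
  have h2 : ∑ x, chi2 (f (x + x0)) = - ∑ x, chi2 (f x) := by
    rw [← Finset.sum_neg_distrib]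
    refine Finset.sum_congr rfl fun x _ => ?_
    rw [hf, chi2_add, chi2_ne _ h0]; ring
  linarith

section aux
variable {J : ℕ} {V : Type*} [AddCommGroup V] [Module (ZMod 2) V] [Fintype V]
  {B : V →ₗ[ZMod 2] V →ₗ[ZMod 2] ZMod 2} {Q : V → ZMod 2}

theorem aux_total (hJ : 0 < J)
    (hdim : Module.finrank (ZMod 2) V = 2 * J)
    (hpos : (quadric Q).ncard = 2 ^ (J - 1) * (2 ^ J + 1)) :
    0 < ∑ w, chi2 (Q w) := by
  have hc : Fintype.card V = 2 ^ (2 * J) := by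
    rw [Module.card_eq_pow_finrank (K := ZMod 2), hdim, ZMod.card]
  have h1 : (quadric Q).ncard = (Finset.univ.filter fun w => Q w = 0).card := by
    rw [← Set.ncard_coe_finset]; congr 1; ext; simp [quadric]
  have h2 : ∑ w, chi2 (Q w) = 2 * ((quadric Q).ncard : ℤ) - Fintype.card V := by
    rw [h1, Finset.card_filter]
    simp only [chi2_eq, Finset.sum_sub_distrib, ← Finset.mul_sum]
    simp
  rw [h2, hpos, hc]
  obtain ⟨k, rfl⟩ : ∃ k, J = k + 1 := ⟨J - 1, by omega⟩
  rw [Nat.add_sub_cancel]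
  push_cast
  have : (0:ℤ) < 2 ^ k := by positivity
  have e : (2:ℤ) ^ (2 * (k+1)) = 4 * (2^k)^2 := by ring
  rw [e, pow_succ]
  nlinarith

theorem aux_exists (hQ : YieldsForm B Q) (ht : 0 < ∑ w, chi2 (Q w))
    (L : Submodule (ZMod 2) V) (hL : ∀ x ∈ L, ∀ y ∈ L, B x y = 0) :
    ∃ w, ∀ x ∈ L, Q (w + x) = 0 := by
  classical
  have hq : ∀ x y, Q (x + y) = Q x + Q y + B x y := fun x y => z2_move _ _ _ _ (hQ x y)
  by_contra! hcon
  have h1 : ∑ w, ∑ x : L, chi2 (Q (w + x)) = Fintype.card L * ∑ w, chi2 (Q w) := by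
    rw [Finset.sum_comm]
    have : ∀ x : L, ∑ w, chi2 (Q (w + x)) = ∑ w, chi2 (Q w) := fun x =>
      Equiv.sum_comp (Equiv.addRight (x : V)) (fun w => chi2 (Q w))
    simp [this]
  have h2 : ∑ w, ∑ x : L, chi2 (Q (w + x)) ≤ 0 := by
    refine Finset.sum_nonpos fun w _ => ?_
    have e : ∀ x : L, chi2 (Q (w + x)) = chi2 (Q w) * chi2 (Q x + B w x) := fun x => by
      rw [hq, add_assoc, chi2_add]
    by_cases hx : ∃ x0 : L, Q x0 + B w x0 ≠ 0
    · obtain ⟨x0, hx0⟩ := hx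
      simp only [e, ← Finset.mul_sum]
      rw [chi2_sum_zero (fun x : L => Q x + B w x) ?_ x0 hx0]
      · simp
      · intro x y
        simp only [Submodule.coe_add, hq, hL x x.2 y y.2, map_add]
        ring
    · push Not at hx
      obtain ⟨y, hy, hy'⟩ := hcon w
      have hw : Q w ≠ 0 := by
        intro h; apply hy'; rw [hq, add_assoc, hx ⟨y, hy⟩, h]; rfl
      refine Finset.sum_nonpos fun x _ => ?_
      rw [e, hx, chi2_ne _ hw]; decide
  have h3 : 0 < (Fintype.card L : ℤ) := by exact_mod_cast Fintype.card_pos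
  have := mul_pos h3 ht
  linarith

theorem aux_symm (hB : IsSymplectic B) (x y : V) : B x y = B y x := by
  have h := hB.1 (x + y)
  simp only [map_add, LinearMap.add_apply, hB.1, zero_add, add_zero] at h
  have : ∀ a b : ZMod 2, a + b = 0 → b = a := by decide
  exact this _ _ h

theorem aux_nondeg (hB : IsSymplectic B) : LinearMap.BilinForm.Nondegenerate B := by
  constructor
  · intro x hx
    by_contra h
    obtain ⟨w, hw⟩ := hB.2 x h
    exact hw (hx w)
  · intro x hx
    by_contra h
    obtain ⟨w, hw⟩ := hB.2 x h
    exact hw (by rw [aux_symm hB]; exact hx w)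

theorem aux_refl (hB : IsSymplectic B) : LinearMap.BilinForm.IsRefl B := by
  intro x y h; rw [aux_symm hB]; exact h

theorem aux_lag_iff (L : Submodule (ZMod 2) V) :
    IsLagrangian B L ↔ ∀ w, w ∈ L ↔ ∀ v ∈ L, B v w = 0 := by
  unfold IsLagrangian sympPerp
  rw [Set.ext_iff]; rfl

theorem aux_mem (S : Submodule (ZMod 2) V) (u x : V) :
    x ∈ S ⊔ Submodule.span (ZMod 2) {u} ↔ x ∈ S ∨ ∃ s ∈ S, x = s + u := by
  rw [Submodule.mem_sup]
  constructor
  · rintro ⟨s, hs, y, hy, rfl⟩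
    obtain ⟨c, rfl⟩ := Submodule.mem_span_singleton.1 hy
    rcases z2_cases c with rfl | rfl
    · left; simpa using hs
    · right; exact ⟨s, hs, by simp⟩
  · rintro (h | ⟨s, hs, rfl⟩)
    · exact ⟨x, h, 0, Submodule.zero_mem _, add_zero _⟩
    · exact ⟨s, hs, u, Submodule.mem_span_singleton_self u, rfl⟩

theorem aux_lag (hdim : Module.finrank (ZMod 2) V = 2 * J) (hJ : 0 < J)
    (hB : IsSymplectic B) (S : Submodule (ZMod 2) V)
    (hS : Module.finrank (ZMod 2) S = J - 1) (hiso : ∀ x ∈ S, ∀ y ∈ S, B x y = 0)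
    (u : V) (hu : ∀ x ∈ S, B x u = 0) (huS : u ∉ S) :
    IsLagrangian B (S ⊔ Submodule.span (ZMod 2) {u}) := by
  set M := S ⊔ Submodule.span (ZMod 2) {u} with hM
  have huM : u ∈ M := (aux_mem S u u).2 (Or.inr ⟨0, S.zero_mem, by simp⟩)
  have hlt : S < M := lt_of_le_of_ne le_sup_left (fun h => huS (h ▸ huM))
  have h1 := Submodule.finrank_lt_finrank_of_lt hlt
  have h2 := LinearMap.BilinForm.finrank_orthogonal (aux_nondeg hB) M
  have hle : M ≤ LinearMap.BilinForm.orthogonal B M := by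
    intro x hx
    rw [LinearMap.BilinForm.mem_orthogonal_iff]
    intro y hy
    rcases (aux_mem S u x).1 hx with h | ⟨s, hs, rfl⟩ <;>
    rcases (aux_mem S u y).1 hy with h' | ⟨t, ht, rfl⟩
    · exact hiso _ h' _ h
    · simp [hiso _ ht _ h, aux_symm hB u x, hu _ h]
    · simp [hiso _ h' _ hs, hu _ h']
    · simp [hiso _ ht _ hs, hu _ ht, aux_symm hB u s, hu _ hs, hB.1]
  have h3 := Submodule.eq_of_le_of_finrank_le hle (by omega)
  rw [aux_lag_iff]
  intro w
  conv_lhs => rw [h3]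
  exact LinearMap.BilinForm.mem_orthogonal_iff

end aux

/-- For a quadratic form of positive sign yielding `B`:
(i) every Lagrangian subspace has exactly one coset contained in the quadric;
(ii) every `(J−1)`-dimensional totally singular subspace is contained in
exactly three Lagrangian subspaces, exactly two of which lie in the quadric. -/
theorem positive_quadric_and_lagrangians
    {J : ℕ} (hJ : 0 < J)
    {V : Type*} [AddCommGroup V] [Module (ZMod 2) V] [Fintype V] [DecidableEq V]
    (hdim : Module.finrank (ZMod 2) V = 2 * J)
    (B : V →ₗ[ZMod 2] V →ₗ[ZMod 2] ZMod 2) (hB : IsSymplectic B)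
    (Q : V → ZMod 2) (hQ : YieldsForm B Q)
    (hpos : (quadric Q).ncard = 2 ^ (J - 1) * (2 ^ J + 1)) :
    (∀ L : Submodule (ZMod 2) V, IsLagrangian B L →
      ∃! C : Set V,
        (∃ v : V, C = (fun x => v + x) '' (L : Set V)) ∧ C ⊆ quadric Q) ∧
    (∀ S : Submodule (ZMod 2) V, Module.finrank (ZMod 2) ↥S = J - 1 →
      (S : Set V) ⊆ quadric Q →
      {L : Submodule (ZMod 2) V | IsLagrangian B L ∧ S ≤ L}.ncard = 3 ∧
      {L : Submodule (ZMod 2) V | IsLagrangian B L ∧ S ≤ L ∧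
        (L : Set V) ⊆ quadric Q}.ncard = 2) := by
  have hq : ∀ x y, Q (x + y) = Q x + Q y + B x y := fun x y => z2_move _ _ _ _ (hQ x y)
  have vself : ∀ x : V, x + x = 0 := fun x => by
    have : (2 : ZMod 2) • x = 0 := by
      have : (2 : ZMod 2) = 0 := by decide
      rw [this, zero_smul]
    rwa [two_smul] at this
  have ht := aux_total (Q := Q) hJ hdim hpos
  refine ⟨?_, ?_⟩
  · intro L hL
    rw [aux_lag_iff] at hL
    obtain ⟨w, hw⟩ := aux_exists hQ ht L (fun x hx y hy => (hL y).1 hy x hx)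
    refine ⟨(fun x => w + x) '' (L : Set V), ⟨⟨w, rfl⟩, ?_⟩, ?_⟩
    · rintro _ ⟨x, hx, rfl⟩
      exact hw x hx
    · rintro _ ⟨⟨v, rfl⟩, hv⟩
      have hv' : ∀ x ∈ L, Q (v + x) = 0 := fun x hx => hv ⟨x, hx, rfl⟩
      have hmem : v + w ∈ L := by
        rw [hL]
        intro x hx
        have h1 := hv' x hx
        have h2 := hw x hx
        have h3 := hv' 0 L.zero_mem
        have h4 := hw 0 L.zero_mem
        rw [add_zero] at h3 h4
        rw [hq, h3] at h1
        rw [hq, h4] at h2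
        rw [aux_symm hB, map_add, LinearMap.add_apply]
        have : ∀ a b c : ZMod 2, 0 + a + b = 0 → 0 + a + c = 0 → b + c = 0 := by decide
        exact this _ _ _ h1 h2
      have key : ∀ p q : V, p + q ∈ L →
          (fun x => p + x) '' (L : Set V) ⊆ (fun x => q + x) '' (L : Set V) := by
        rintro p q hpq _ ⟨x, hx, rfl⟩
        refine ⟨p + q + x, L.add_mem hpq hx, ?_⟩
        have := vself q
        calc q + (p + q + x) = (q + q) + (p + x) := by abel
          _ = p + x := by rw [this, zero_add]
      exact Set.Subset.antisymm (key v w hmem) (key w v (by rwa [add_comm]))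
  · intro S hS hSQ
    have hSQ' : ∀ x ∈ S, Q x = 0 := fun x hx => hSQ hx
    have hiso : ∀ x ∈ S, ∀ y ∈ S, B x y = 0 := fun x hx y hy => by
      rw [← hQ, hSQ' x hx, hSQ' y hy, hSQ' _ (S.add_mem hx hy)]; rfl
    have hlag := aux_lag hdim hJ hB S hS hiso
    have hself : ∀ u, u ∈ S ⊔ Submodule.span (ZMod 2) {u} := fun u =>
      (aux_mem S u u).2 (Or.inr ⟨0, S.zero_mem, by simp⟩)
    -- a first vector
    obtain ⟨a0, ha0, ha0S⟩ : ∃ a, (∀ x ∈ S, B x a = 0) ∧ a ∉ S := by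
      by_contra! hcon
      have hle : LinearMap.BilinForm.orthogonal B S ≤ S := fun x hx => hcon x hx
      have h1 := Submodule.finrank_mono hle
      rw [LinearMap.BilinForm.finrank_orthogonal (aux_nondeg hB) S] at h1
      omega
    -- a singular one
    obtain ⟨a, ha, haS, haQ⟩ : ∃ a, (∀ x ∈ S, B x a = 0) ∧ a ∉ S ∧ Q a = 0 := by
      have hL := (aux_lag_iff _).1 (hlag a0 ha0 ha0S)
      obtain ⟨w, hw⟩ := aux_exists hQ ht (S ⊔ Submodule.span (ZMod 2) {a0})
        (fun x hx y hy => (hL y).1 hy x hx)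
      have hw0 := hw 0 (Submodule.zero_mem _)
      rw [add_zero] at hw0
      by_cases hwS : w ∈ S
      · refine ⟨w + a0, ?_, ?_, hw a0 (hself a0)⟩
        · intro x hx
          rw [map_add, ha0 x hx, hiso x hx w hwS, add_zero]
        · intro h
          exact ha0S ((Submodule.add_mem_iff_right S hwS).1 h)
      · refine ⟨w, ?_, hwS, hw0⟩
        intro x hx
        have h1 := hw x (Submodule.mem_sup_left hx)
        rw [hq, hw0, hSQ' x hx, zero_add, zero_add] at h1
        rw [aux_symm hB, h1]
    obtain ⟨b, hb, hab, hbQ⟩ : ∃ b, (∀ x ∈ S, B x b = 0) ∧ B a b = 1 ∧ Q b = 0 := by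
      obtain ⟨b, hb, hab⟩ : ∃ b, (∀ x ∈ S, B x b = 0) ∧ B a b ≠ 0 := by
        by_contra! hcon
        apply haS
        rw [← LinearMap.BilinForm.orthogonal_orthogonal (aux_nondeg hB) (aux_refl hB) S]
        rw [LinearMap.BilinForm.mem_orthogonal_iff]
        intro n hn
        rw [aux_symm hB]
        exact hcon n hn
      have hab1 := z2_ne _ hab
      rcases z2_cases (Q b) with h | h
      · exact ⟨b, hb, hab1, h⟩
      · refine ⟨a + b, ?_, ?_, ?_⟩
        · intro x hx; rw [map_add, ha x hx, hb x hx, add_zero]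
        · rw [map_add, hB.1, hab1, zero_add]
        · rw [hq, haQ, h, hab1]; decide
    have hba : B b a = 1 := by rw [aux_symm hB, hab]
    have hbS : b ∉ S := fun h => by
      have := ha b h
      rw [hba] at this; exact one_ne_zero this
    have hc : ∀ x ∈ S, B x (a + b) = 0 := fun x hx => by
      rw [map_add, ha x hx, hb x hx, add_zero]
    have hac : B a (a + b) = 1 := by rw [map_add, hB.1, hab, zero_add]
    have hbc : B b (a + b) = 1 := by rw [map_add, hB.1, hba, add_zero]
    have hcS : a + b ∉ S := fun h => by
      have := ha _ h
      rw [aux_symm hB, hac] at this; exact one_ne_zero this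
    have hcQ : Q (a + b) = 1 := by rw [hq, haQ, hbQ, hab]; decide
    have hLa := hlag a ha haS
    have hLb := hlag b hb hbS
    have hLc := hlag (a + b) hc hcS
    -- decomposition
    have hdec : ∀ u, (∀ x ∈ S, B x u = 0) → u + B b u • a + B a u • b ∈ S := by
      intro u hu
      have h1 : u + B b u • a + B a u • b ∈ S ⊔ Submodule.span (ZMod 2) {a} := by
        rw [(aux_lag_iff _).1 hLa]
        intro x hx
        rcases (aux_mem S a x).1 hx with h | ⟨s, hs, rfl⟩
        · simp [hu x h, ha x h, hb x h]
        · simp [hu s hs, ha s hs, hb s hs, hB.1, hab, z2_self]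
      rcases (aux_mem S a _).1 h1 with h | ⟨s, hs, h⟩
      · exact h
      · exfalso
        have h2 : B b (u + B b u • a + B a u • b) = 0 := by
          simp [hba, hB.1, z2_self]
        rw [h, map_add, aux_symm hB b s, hb s hs, hba, zero_add] at h2
        exact one_ne_zero h2
    -- uniqueness of a Lagrangian through u
    have huniq : ∀ L, IsLagrangian B L → S ≤ L → ∀ u, (∀ x ∈ S, B x u = 0) → u ∉ S →
        u ∈ L → L = S ⊔ Submodule.span (ZMod 2) {u} := by
      intro L hL hSL u hu huS huL
      have hle : S ⊔ Submodule.span (ZMod 2) {u} ≤ L := by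
        refine sup_le hSL ?_
        rw [Submodule.span_singleton_le_iff_mem]; exact huL
      refine le_antisymm ?_ hle
      intro x hx
      rw [(aux_lag_iff _).1 (hlag u hu huS)]
      intro y hy
      exact ((aux_lag_iff _).1 hL x).1 hx y (hle hy)
    have hclass : ∀ L, IsLagrangian B L → S ≤ L →
        L = S ⊔ Submodule.span (ZMod 2) {a} ∨ L = S ⊔ Submodule.span (ZMod 2) {b} ∨
        L = S ⊔ Submodule.span (ZMod 2) {a + b} := by
      intro L hL hSL
      have hL' := (aux_lag_iff _).1 hL
      obtain ⟨u, huL, huS⟩ : ∃ u ∈ L, u ∉ S := by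
        by_contra! hcon
        apply haS
        apply hcon
        rw [hL']
        intro v hv
        exact ha v (hcon v hv)
      have hu : ∀ x ∈ S, B x u = 0 := fun x hx => (hL' u).1 huL x (hSL hx)
      have hd := hdec u hu
      have hin : ∀ v, u + v ∈ S → v ∈ L := fun v hv =>
        (Submodule.add_mem_iff_right L huL).1 (hSL hv)
      rcases z2_cases (B b u) with h1 | h1 <;> rcases z2_cases (B a u) with h2 | h2 <;>
        rw [h1, h2] at hd
      · exact absurd (by simpa using hd) huS
      · right; left
        exact huniq L hL hSL b hb hbS (hin b (by simpa using hd))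
      · left
        exact huniq L hL hSL a ha haS (hin a (by simpa using hd))
      · right; right
        exact huniq L hL hSL (a + b) hc hcS (hin (a + b) (by simpa [add_assoc] using hd))
    have hne : ∀ u v, IsLagrangian B (S ⊔ Submodule.span (ZMod 2) {v}) → B u v = 1 →
        S ⊔ Submodule.span (ZMod 2) {u} ≠ S ⊔ Submodule.span (ZMod 2) {v} := by
      intro u v hv huv h
      have h1 := hself u
      rw [h] at h1
      have h2 := ((aux_lag_iff _).1 hv v).1 (hself v) u h1
      rw [huv] at h2; exact one_ne_zero h2
    have n1 := hne a b hLb hab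
    have n2 := hne a (a + b) hLc hac
    have n3 := hne b (a + b) hLc hbc
    have hsing : ∀ u, (∀ x ∈ S, B x u = 0) → Q u = 0 →
        ((S ⊔ Submodule.span (ZMod 2) {u} : Submodule (ZMod 2) V) : Set V) ⊆ quadric Q := by
      intro u hu hQu x hx
      rcases (aux_mem S u x).1 hx with h | ⟨s, hs, rfl⟩
      · exact hSQ h
      · change Q (s + u) = 0
        rw [hq, hSQ' s hs, hQu, hu s hs]; rfl
    constructor
    · rw [Set.ncard_eq_three]
      refine ⟨_, _, _, n1, n2, n3, ?_⟩
      ext L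
      simp only [Set.mem_setOf_eq, Set.mem_insert_iff, Set.mem_singleton_iff]
      constructor
      · rintro ⟨h1, h2⟩; exact hclass L h1 h2
      · rintro (rfl | rfl | rfl)
        · exact ⟨hLa, le_sup_left⟩
        · exact ⟨hLb, le_sup_left⟩
        · exact ⟨hLc, le_sup_left⟩
    · rw [Set.ncard_eq_two]
      refine ⟨_, _, n1, ?_⟩
      ext L
      simp only [Set.mem_setOf_eq, Set.mem_insert_iff, Set.mem_singleton_iff]
      constructor
      · rintro ⟨h1, h2, h3⟩
        rcases hclass L h1 h2 with h | h | h
        · exact Or.inl h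
        · exact Or.inr h
        · exfalso
          have h4 : Q (a + b) = 0 := h3 (by rw [h]; exact hself _)
          rw [hcQ] at h4; exact one_ne_zero h4
      · rintro (rfl | rfl)
        · exact ⟨hLa, le_sup_left, hsing a ha haQ⟩
        · exact ⟨hLb, le_sup_left, hsing b hb hbQ⟩
end
end
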